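/- Let F_1,...,F_k be positive real numbers and n_1,...,n_k unit vectors in R^m (m ≥ 2) not all lying in a single hyperplane through the origin, satisfying Σ_j F_j n_j = 0. Then there exists a compact convex polytope P in R^m, unique up to translation, whose facets have exactly the outward unit normals n_1,...,n_k with (m−1)-dimensional volumes F_1,...,F_k respectively. -/

import Mathlib

open MeasureTheory Set
open scoped ENNReal Pointwise RealInnerProductSpace Topology

noncomputable section

abbrev Euc (m : ℕ) : Type := EuclideanSpace ℝ (Fin m)

/-- A convex body: compact convex set with nonempty interior. -/
def IsConvexBody {m : ℕ} (K : Set (Euc m)) : Prop :=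
  Convex ℝ K ∧ IsCompact K ∧ (interior K).Nonempty

/-- A (compact convex) polytope: convex hull of a finite set. -/
def IsPolytope {m : ℕ} (P : Set (Euc m)) : Prop :=
  ∃ s : Finset (Euc m), P = convexHull ℝ (s : Set (Euc m))

def unitSphere (m : ℕ) : Set (Euc m) := Metric.sphere 0 1

/-- `n` is an outward unit normal to `K` at the boundary point `x`. -/
def IsOutwardNormalAt {m : ℕ} (K : Set (Euc m)) (x n : Euc m) : Prop :=
  x ∈ frontier K ∧ ‖n‖ = 1 ∧ ∀ y ∈ K, ⟪y - x, n⟫ ≤ 0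

open Classical in
/-- The (set-valued choice of) Gauss map of `K`. -/
def gaussMap {m : ℕ} (K : Set (Euc m)) (x : Euc m) : Euc m :=
  if h : ∃ n, IsOutwardNormalAt K x n then h.choose else 0

/-- The surface area measure of `K`: the pushforward under the Gauss map of the
`(m-1)`-dimensional Hausdorff measure on the boundary of `K`. -/
def surfMeasure {m : ℕ} (K : Set (Euc m)) : Measure (Euc m) :=
  Measure.map (gaussMap K) (μH[(m : ℝ) - 1].restrict (frontier K))

/-- The face of `P` in direction `n`. -/
def faceIn {m : ℕ} (P : Set (Euc m)) (n : Euc m) : Set (Euc m) :=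
  {x ∈ P | ∀ y ∈ P, ⟪y, n⟫ ≤ ⟪x, n⟫}

/-- The `(m-1)`-dimensional volume of the face of `P` in direction `n`. -/
def faceArea {m : ℕ} (P : Set (Euc m)) (n : Euc m) : ℝ≥0∞ :=
  μH[(m : ℝ) - 1] (faceIn P n)

/-- `n` is the outward unit normal to a facet ((m-1)-dimensional face) of `P`. -/
def IsFacetNormal {m : ℕ} (P : Set (Euc m)) (n : Euc m) : Prop :=
  ‖n‖ = 1 ∧ 0 < faceArea P n

/-!
For support numbers `h`, let `V h` be the volume of the polyhedron `{x | ∀ j, ⟪x, n j⟫ ≤ h j}`. The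
partial derivatives of `V` are the facet areas, and `V` is log-concave by Brunn–Minkowski.

Existence: by the closing condition, translations preserve `∑ j, F j * h j`. One may therefore
assume `h ≥ 0`, so that `V` attains a maximum under the constraint `∑ j, F j * h j = 1`. By
Lagrange's condition the facet areas of a maximizer are proportional to `F`; rescaling makes
them equal.

Uniqueness: the tangent inequality for `log V`, together with Euler's identity for the homogeneous
function `V`, shows that two polyhedra `K` and `L` with the same facet areas have the same volume
and that their average `(K + L) / 2` has no larger volume, which is equality in Brunn–Minkowski. To
see that `K` and `L` are then translates, cut both by the hyperplanes orthogonal to a direction `u`: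
transporting one distribution of section volumes to the other shows that both have the same profile
up to a shift, so that the difference of the centroids of `K` and `L` determines the difference of
their support numbers in the direction `u`.

Every polytope is the polyhedron cut out by its facets, since a segment from an outside point to a
generic interior point enters the polytope through the relative interior of a facet.
-/

/-! ### The Prékopa–Leindler inequality on the line -/

theorem volume_add_volume_le_of_isCompact {K L : Set ℝ} (hK : IsCompact K) (hL : IsCompact L)
    (hK₀ : K.Nonempty) (hL₀ : L.Nonempty) : volume K + volume L ≤ volume (K + L) := by
  obtain ⟨x, hxK, hx⟩ := hK.exists_isGreatest hK₀
  obtain ⟨y, hyL, hy⟩ := hL.exists_isLeast hL₀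
  have hdisj : AEDisjoint volume (y +ᵥ K) (x +ᵥ L) := by
    refine measure_mono_null (t := {x + y}) ?_ (by simp)
    rintro _ ⟨⟨p, hp, rfl⟩, q, hq, hpq⟩
    have hpx := hx hp
    have hyq := hy hq
    simp only [vadd_eq_add, mem_singleton_iff] at hpq ⊢
    linarith
  calc volume K + volume L = volume ((y +ᵥ K) ∪ (x +ᵥ L)) := by
        rw [measure_union₀ (hL.measurableSet.const_vadd x).nullMeasurableSet hdisj]
        simp only [measure_vadd]
    _ ≤ volume (K + L) := measure_mono <| union_subset
        (by rw [add_comm]; exact vadd_set_subset_add hyL) (vadd_set_subset_add hxK)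

theorem volume_add_volume_le_of_add_subset {A B C : Set ℝ} (hA : MeasurableSet A)
    (hB : MeasurableSet B) (hA₀ : A.Nonempty) (hB₀ : B.Nonempty) (h : A + B ⊆ C) :
    volume A + volume B ≤ volume C := by
  rw [hA.measure_eq_iSup_isCompact, hB.measure_eq_iSup_isCompact]
  obtain ⟨a, ha⟩ := hA₀
  obtain ⟨b, hb⟩ := hB₀
  simp only [iSup_and']
  refine ENNReal.biSup_add_biSup_le' ⟨∅, by simp⟩ ⟨∅, by simp⟩ ?_
  rintro K ⟨hKA, hK⟩ L ⟨hLB, hL⟩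
  calc volume K + volume L ≤ volume (insert a K) + volume (insert b L) := by
        gcongr <;> exact subset_insert _ _
    _ ≤ volume (insert a K + insert b L) :=
        volume_add_volume_le_of_isCompact (hK.insert a) (hL.insert b) (insert_nonempty _ _)
          (insert_nonempty _ _)
    _ ≤ volume C := measure_mono <|
        (add_subset_add (insert_subset ha hKA) (insert_subset hb hLB)).trans h

theorem lintegral_ofReal_eq_setLIntegral_Ioo_meas_lt {α : Type*} [MeasurableSpace α]
    {μ : Measure α} {f : α → ℝ} (hf : AEMeasurable f μ) (hf₀ : ∀ x, 0 ≤ f x) (hf₁ : ∀ x, f x ≤ 1) :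
    ∫⁻ x, ENNReal.ofReal (f x) ∂μ = ∫⁻ r in Ioo (0 : ℝ) 1, μ {x | r < f x} := by
  have hzero : ∫⁻ r in Ici (1 : ℝ), μ {x | r < f x} = 0 := by
    refine setLIntegral_eq_zero measurableSet_Ici fun r hr => ?_
    have hempty : {x | r < f x} = ∅ := eq_empty_of_forall_notMem fun x hx =>
      absurd hx (not_lt.2 ((hf₁ x).trans hr))
    simp [hempty]
  rw [lintegral_eq_lintegral_meas_lt μ (ae_of_all _ hf₀) hf, ← Ioo_union_Ici_eq_Ioi zero_lt_one,
    lintegral_union measurableSet_Ici, hzero, add_zero]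
  exact disjoint_left.2 fun x hx hx' => absurd hx.2 (not_lt.2 hx')

theorem rpow_mul_rpow_le_ofReal_mul_add {a b : ℝ} (ha : 0 < a) (hb : 0 < b) (hab : a + b = 1)
    (x y : ℝ≥0∞) : x ^ a * y ^ b ≤ ENNReal.ofReal a * x + ENNReal.ofReal b * y := by
  have hyoung := ENNReal.young_inequality (x ^ a) (y ^ b) (Real.HolderConjugate.inv_inv ha hb hab)
  rwa [ENNReal.rpow_rpow_inv ha.ne', ENNReal.rpow_rpow_inv hb.ne', ENNReal.ofReal_inv_of_pos ha,
    ENNReal.ofReal_inv_of_pos hb, div_eq_mul_inv, div_eq_mul_inv, inv_inv, inv_inv,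
    mul_comm x, mul_comm y] at hyoung

section PrekopaLeindler

variable {f g h : ℝ → ℝ} {a b : ℝ}

theorem ofReal_mul_volume_superlevel_add_le (ha : 0 < a) (hb : 0 < b) (hab : a + b = 1)
    (hf : Measurable f) (hg : Measurable g)
    (hfgh : ∀ x y, 0 < f x → 0 < g y → f x ^ a * g y ^ b ≤ h (a * x + b * y))
    {r : ℝ} (hr : 0 < r) (hfr : ∃ x, r < f x) (hgr : ∃ y, r < g y) :
    ENNReal.ofReal a * volume {x | r < f x} + ENNReal.ofReal b * volume {y | r < g y} ≤
      volume {z | r < h z} := by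
  have hscale : ∀ s : ℝ, 0 < s → ∀ S : Set ℝ, ENNReal.ofReal s * volume S = volume (s • S) :=
    fun s hs S => by simp [Measure.addHaar_smul, abs_of_pos hs]
  rw [hscale a ha, hscale b hb]
  refine volume_add_volume_le_of_add_subset
    ((measurableSet_lt measurable_const hf).const_smul₀ _)
    ((measurableSet_lt measurable_const hg).const_smul₀ _)
    (Nonempty.smul_set hfr) (Nonempty.smul_set hgr) ?_
  rintro _ ⟨_, ⟨x, hx, rfl⟩, _, ⟨y, hy, rfl⟩, rfl⟩
  simp only [mem_ofPred_eq] at hx hy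
  calc r = r ^ a * r ^ b := by rw [← Real.rpow_add hr, hab, Real.rpow_one]
    _ < f x ^ a * g y ^ b := by gcongr
    _ ≤ h (a * x + b * y) := hfgh x y (hr.trans hx) (hr.trans hy)

theorem prekopa_leindler_of_isLUB_one (ha : 0 < a) (hb : 0 < b) (hab : a + b = 1)
    (hf : Measurable f) (hg : Measurable g) (hh : Measurable h)
    (hf₀ : ∀ x, 0 ≤ f x) (hg₀ : ∀ x, 0 ≤ g x) (hh₀ : ∀ x, 0 ≤ h x)
    (hf₁ : IsLUB (range f) 1) (hg₁ : IsLUB (range g) 1)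
    (hfgh : ∀ x y, 0 < f x → 0 < g y → f x ^ a * g y ^ b ≤ h (a * x + b * y)) :
    (∫⁻ x, ENNReal.ofReal (f x)) ^ a * (∫⁻ x, ENNReal.ofReal (g x)) ^ b ≤
      ∫⁻ x, ENNReal.ofReal (h x) := by
  have hmono : ∀ p : ℝ → ℝ, Measurable fun r : ℝ => volume {x | r < p x} := fun p =>
    Antitone.measurable fun _ _ hrs => measure_mono fun _ hx => hrs.trans_lt hx
  calc (∫⁻ x, ENNReal.ofReal (f x)) ^ a * (∫⁻ x, ENNReal.ofReal (g x)) ^ b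
      ≤ ENNReal.ofReal a * (∫⁻ x, ENNReal.ofReal (f x)) +
          ENNReal.ofReal b * (∫⁻ x, ENNReal.ofReal (g x)) :=
        rpow_mul_rpow_le_ofReal_mul_add ha hb hab _ _
    _ = ∫⁻ r in Ioo (0 : ℝ) 1, (ENNReal.ofReal a * volume {x | r < f x} +
          ENNReal.ofReal b * volume {x | r < g x}) := by
        rw [lintegral_ofReal_eq_setLIntegral_Ioo_meas_lt hf.aemeasurable hf₀
            fun x => hf₁.1 (mem_range_self x),
          lintegral_ofReal_eq_setLIntegral_Ioo_meas_lt hg.aemeasurable hg₀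
            fun x => hg₁.1 (mem_range_self x),
          lintegral_add_left ((hmono f).const_mul _), lintegral_const_mul _ (hmono f),
          lintegral_const_mul _ (hmono g)]
    _ ≤ ∫⁻ r in Ioo (0 : ℝ) 1, volume {x | r < h x} :=
        setLIntegral_mono (hmono h) fun r hr =>
          ofReal_mul_volume_superlevel_add_le ha hb hab hf hg hfgh hr.1
            (by simpa using (lt_isLUB_iff hf₁).1 hr.2) (by simpa using (lt_isLUB_iff hg₁).1 hr.2)
    _ ≤ ∫⁻ r in Ioi (0 : ℝ), volume {x | r < h x} := lintegral_mono_set Ioo_subset_Ioi_self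
    _ = ∫⁻ x, ENNReal.ofReal (h x) :=
        (lintegral_eq_lintegral_meas_lt volume (ae_of_all _ hh₀) hh.aemeasurable).symm

theorem isLUB_range_div_ciSup {p : ℝ → ℝ} (hp : BddAbove (range p)) (hpos : 0 < ⨆ x, p x) :
    IsLUB (range fun x => p x / ⨆ x, p x) 1 := by
  have himage := (OrderIso.divRight₀ _ hpos).isLUB_image'.2 (isLUB_ciSup hp)
  rwa [← range_comp, OrderIso.divRight₀_apply, div_self hpos.ne'] at himage

theorem lintegral_ofReal_eq_ofReal_mul_lintegral_div {p : ℝ → ℝ} (hp : Measurable p) {c : ℝ}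
    (hc : 0 < c) :
    ∫⁻ x, ENNReal.ofReal (p x) = ENNReal.ofReal c * ∫⁻ x, ENNReal.ofReal (p x / c) := by
  rw [← lintegral_const_mul _ (by fun_prop)]
  exact lintegral_congr fun x => by rw [← ENNReal.ofReal_mul hc.le, mul_div_cancel₀ _ hc.ne']

theorem prekopa_leindler (ha : 0 < a) (hb : 0 < b) (hab : a + b = 1)
    (hf : Measurable f) (hg : Measurable g) (hh : Measurable h)
    (hf₀ : ∀ x, 0 ≤ f x) (hg₀ : ∀ x, 0 ≤ g x) (hh₀ : ∀ x, 0 ≤ h x)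
    (hfb : BddAbove (range f)) (hgb : BddAbove (range g))
    (hfgh : ∀ x y, 0 < f x → 0 < g y → f x ^ a * g y ^ b ≤ h (a * x + b * y)) :
    (∫⁻ x, ENNReal.ofReal (f x)) ^ a * (∫⁻ x, ENNReal.ofReal (g x)) ^ b ≤
      ∫⁻ x, ENNReal.ofReal (h x) := by
  by_cases hfz : ∀ x, f x = 0
  · simp [hfz, ha]
  by_cases hgz : ∀ x, g x = 0
  · simp [hgz, hb]
  push Not at hfz hgz
  have sup_pos : ∀ {p : ℝ → ℝ}, (∀ x, 0 ≤ p x) → BddAbove (range p) → (∃ x, p x ≠ 0) →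
      0 < ⨆ x, p x := fun hp₀ hpb ⟨x, hx⟩ => ((hp₀ x).lt_of_ne' hx).trans_le (le_ciSup hpb x)
  have hM₀ := sup_pos hf₀ hfb hfz
  have hN₀ := sup_pos hg₀ hgb hgz
  have hM₁ := isLUB_range_div_ciSup hfb hM₀
  have hN₁ := isLUB_range_div_ciSup hgb hN₀
  generalize ⨆ x, f x = M at hM₀ hM₁
  generalize ⨆ x, g x = N at hN₀ hN₁
  have hMN₀ : 0 < M ^ a * N ^ b := by positivity
  have hnormalized := prekopa_leindler_of_isLUB_one (h := fun x => h x / (M ^ a * N ^ b))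
    ha hb hab (by fun_prop) (by fun_prop) (by fun_prop)
    (fun x => div_nonneg (hf₀ x) hM₀.le) (fun x => div_nonneg (hg₀ x) hN₀.le)
    (fun x => div_nonneg (hh₀ x) hMN₀.le) hM₁ hN₁
    (fun x y hx hy => by
      rw [Real.div_rpow (hf₀ x) hM₀.le, Real.div_rpow (hg₀ y) hN₀.le, div_mul_div_comm]
      exact div_le_div_of_nonneg_right (hfgh x y ((div_pos_iff_of_pos_right hM₀).1 hx)
        ((div_pos_iff_of_pos_right hN₀).1 hy)) hMN₀.le)
  rw [lintegral_ofReal_eq_ofReal_mul_lintegral_div hf hM₀,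
    lintegral_ofReal_eq_ofReal_mul_lintegral_div hg hN₀,
    lintegral_ofReal_eq_ofReal_mul_lintegral_div hh hMN₀, ENNReal.mul_rpow_of_nonneg _ _ ha.le,
    ENNReal.mul_rpow_of_nonneg _ _ hb.le, mul_mul_mul_comm,
    ENNReal.ofReal_mul (Real.rpow_nonneg hM₀.le _), ENNReal.ofReal_rpow_of_pos hM₀,
    ENNReal.ofReal_rpow_of_pos hN₀]
  gcongr

end PrekopaLeindler

/-! ### The equality case of the Prékopa–Leindler inequality -/

section Quantile

variable {f : ℝ → ℝ} {a b : ℝ}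

theorem continuousOn_integral_Icc (hab : a < b) (hfi : IntervalIntegrable f volume a b) :
    ContinuousOn (fun x => ∫ r in a..x, f r) (Icc a b) := by
  simpa [uIcc_of_le hab.le] using
    intervalIntegral.continuousOn_primitive_interval' hfi left_mem_uIcc

theorem hasDerivAt_integral_Ioo (hf : ContinuousOn f (Ioo a b))
    (hfi : IntervalIntegrable f volume a b) {x : ℝ} (hx : x ∈ Ioo a b) :
    HasDerivAt (fun x => ∫ r in a..x, f r) (f x) x := by
  refine intervalIntegral.integral_hasDerivAt_right
    (hfi.mono_set (uIcc_subset_uIcc left_mem_uIcc ?_))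
    (hf.stronglyMeasurableAtFilter isOpen_Ioo x hx) (hf.continuousAt (isOpen_Ioo.mem_nhds hx))
  exact mem_uIcc_of_le hx.1.le hx.2.le

theorem strictMonoOn_integral_Icc (hab : a < b) (hf : ContinuousOn f (Ioo a b))
    (hf₀ : ∀ x ∈ Ioo a b, 0 < f x) (hfi : IntervalIntegrable f volume a b) :
    StrictMonoOn (fun x => ∫ r in a..x, f r) (Icc a b) := by
  refine strictMonoOn_of_deriv_pos (convex_Icc a b) (continuousOn_integral_Icc hab hfi)
    fun x hx => ?_
  rw [interior_Icc] at hx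
  rw [(hasDerivAt_integral_Ioo hf hfi hx).deriv]
  exact hf₀ x hx

theorem bijOn_integral_Ioo (hab : a < b) (hf : ContinuousOn f (Ioo a b))
    (hf₀ : ∀ x ∈ Ioo a b, 0 < f x) (hfi : IntervalIntegrable f volume a b) :
    BijOn (fun x => ∫ r in a..x, f r) (Ioo a b) (Ioo 0 (∫ x in a..b, f x)) := by
  have hmono := strictMonoOn_integral_Icc hab hf hf₀ hfi
  refine ⟨fun x hx => ⟨?_, ?_⟩, hmono.injOn.mono Ioo_subset_Icc_self, ?_⟩
  · simpa using hmono (left_mem_Icc.2 hab.le) (Ioo_subset_Icc_self hx) hx.1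
  · exact hmono (Ioo_subset_Icc_self hx) (right_mem_Icc.2 hab.le) hx.2
  · simpa [SurjOn] using intermediate_value_Ioo hab.le (continuousOn_integral_Icc hab hfi)

theorem exists_quantile (hab : a < b) (hf : ContinuousOn f (Ioo a b))
    (hf₀ : ∀ x ∈ Ioo a b, 0 < f x) (hfi : IntervalIntegrable f volume a b) :
    ∃ α : ℝ → ℝ, BijOn α (Ioo 0 (∫ x in a..b, f x)) (Ioo a b) ∧
      ∀ s ∈ Ioo 0 (∫ x in a..b, f x), HasDerivAt α (f (α s))⁻¹ s := by
  have hbij := bijOn_integral_Ioo hab hf hf₀ hfi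
  have hinv := hbij.invOn_invFunOn
  have hbij' := hbij.symm hinv.symm
  refine ⟨_, hbij', fun s hs => ?_⟩
  have hmono : StrictMonoOn (Function.invFunOn (fun x => ∫ r in a..x, f r) (Ioo a b))
      (Ioo 0 (∫ x in a..b, f x)) := fun s hs t ht hst =>
    (((strictMonoOn_integral_Icc hab hf hf₀ hfi).mono Ioo_subset_Icc_self).lt_iff_lt
      (hbij'.mapsTo hs) (hbij'.mapsTo ht)).1
      ((hinv.2 hs).trans_lt (hst.trans_eq (hinv.2 ht).symm))
  refine HasDerivAt.of_local_left_inverse ?_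
    (hasDerivAt_integral_Ioo hf hfi (hbij'.mapsTo hs)) (hf₀ _ (hbij'.mapsTo hs)).ne' ?_
  · refine hmono.continuousAt_of_image_mem_nhds (isOpen_Ioo.mem_nhds hs) ?_
    rw [hbij'.image_eq]
    exact isOpen_Ioo.mem_nhds (hbij'.mapsTo hs)
  · filter_upwards [isOpen_Ioo.mem_nhds hs] with r hr using hinv.2 hr

end Quantile

theorem sqrt_mul_mul_inv_add_inv_div_two_sub_one {p q : ℝ} (hp : 0 < p) (hq : 0 < q) :
    √(p * q) * ((p⁻¹ + q⁻¹) / 2) - 1 = (√p - √q) ^ 2 / (2 * (√p * √q)) := by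
  have hsqrt : √p ≠ 0 ∧ √q ≠ 0 := ⟨(Real.sqrt_pos.2 hp).ne', (Real.sqrt_pos.2 hq).ne'⟩
  rw [Real.sqrt_mul hp.le]
  nth_rewrite 2 [← Real.sq_sqrt hp.le]
  nth_rewrite 2 [← Real.sq_sqrt hq.le]
  field_simp [hsqrt]
  ring

theorem one_le_sqrt_mul_mul_inv_add_inv_div_two {p q : ℝ} (hp : 0 < p) (hq : 0 < q) :
    1 ≤ √(p * q) * ((p⁻¹ + q⁻¹) / 2) := by
  rw [← sub_nonneg, sqrt_mul_mul_inv_add_inv_div_two_sub_one hp hq]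
  positivity

theorem eq_of_sqrt_mul_mul_inv_add_inv_div_two_le_one {p q : ℝ} (hp : 0 < p) (hq : 0 < q)
    (h : √(p * q) * ((p⁻¹ + q⁻¹) / 2) ≤ 1) : p = q := by
  have hpos : 0 < 2 * (√p * √q) := by positivity
  rw [← sub_nonpos, sqrt_mul_mul_inv_add_inv_div_two_sub_one hp hq] at h
  rw [← Real.sqrt_inj hp.le hq.le, ← sub_eq_zero, ← sq_eq_zero_iff]
  refine le_antisymm (nonpos_of_mul_nonpos_left h (inv_pos.2 hpos)) (sq_nonneg _)

theorem eqOn_id_of_monotoneOn_sub_id {φ : ℝ → ℝ} {I : ℝ}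
    (hφ : MonotoneOn (fun s => φ s - s) (Ioo 0 I)) (hmaps : MapsTo φ (Ioo 0 I) (Icc 0 I)) :
    EqOn φ id (Ioo 0 I) := by
  intro s hs
  refine le_antisymm (le_of_forall_pos_le_add fun ε hε => ?_)
    (le_of_forall_pos_le_add fun ε hε => ?_)
  · have hmem : max s (I - ε) ∈ Ioo 0 I := ⟨lt_max_of_lt_left hs.1, max_lt hs.2 (by linarith)⟩
    have hle := hφ hs hmem (le_max_left _ _)
    simp only [id] at hle ⊢
    linarith [(hmaps hmem).2, le_max_right s (I - ε)]
  · have hmem : min s ε ∈ Ioo 0 I := ⟨lt_min hs.1 hε, min_lt_of_left_lt hs.2⟩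
    have hle := hφ hmem hs (min_le_left _ _)
    simp only [id] at hle ⊢
    linarith [(hmaps hmem).1, min_le_right s ε]

section EqualityCase

variable {f g h α β : ℝ → ℝ} {a b c d I : ℝ}

/- With `α`, `β` the quantile functions of `f`, `g` and `z = (α + β) / 2`, the function
`s ↦ ∫_{z 0}^{z s} h` has derivative at least `1`, yet it maps `(0, I)` to `[0, I]`. -/
theorem comp_eqOn_comp_of_prekopa_leindler_eq
    (hα : MapsTo α (Ioo 0 I) (Ioo a b)) (hβ : MapsTo β (Ioo 0 I) (Ioo c d))
    (hα' : ∀ s ∈ Ioo 0 I, HasDerivAt α (f (α s))⁻¹ s)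
    (hβ' : ∀ s ∈ Ioo 0 I, HasDerivAt β (g (β s))⁻¹ s)
    (hf₀ : ∀ x ∈ Ioo a b, 0 < f x) (hg₀ : ∀ y ∈ Ioo c d, 0 < g y) (hh₀ : ∀ x, 0 ≤ h x)
    (hh : ContinuousOn h (Ioo ((a + c) / 2) ((b + d) / 2)))
    (hhi : IntervalIntegrable h volume ((a + c) / 2) ((b + d) / 2))
    (hhI : ∫ x in ((a + c) / 2)..((b + d) / 2), h x ≤ I)
    (hfgh : ∀ x ∈ Ioo a b, ∀ y ∈ Ioo c d, √(f x * g y) ≤ h ((x + y) / 2)) :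
    EqOn (f ∘ α) (g ∘ β) (Ioo 0 I) := by
  have hz : ∀ s ∈ Ioo 0 I, (α s + β s) / 2 ∈ Ioo ((a + c) / 2) ((b + d) / 2) := fun s hs =>
    ⟨by linarith [(hα hs).1, (hβ hs).1], by linarith [(hα hs).2, (hβ hs).2]⟩
  have hderiv : ∀ s ∈ Ioo 0 I, HasDerivAt
      (fun s => ∫ r in ((a + c) / 2)..((α s + β s) / 2), h r)
      (h ((α s + β s) / 2) * (((f (α s))⁻¹ + (g (β s))⁻¹) / 2)) s := fun s hs =>
    HasDerivAt.comp (h₂ := fun x => ∫ r in ((a + c) / 2)..x, h r) s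
      (hasDerivAt_integral_Ioo hh hhi (hz s hs)) (((hα' s hs).fun_add (hβ' s hs)).div_const 2)
  have hle : ∀ s ∈ Ioo 0 I, √(f (α s) * g (β s)) * (((f (α s))⁻¹ + (g (β s))⁻¹) / 2) ≤
      h ((α s + β s) / 2) * (((f (α s))⁻¹ + (g (β s))⁻¹) / 2) := fun s hs => by
    have hfα := hf₀ _ (hα hs)
    have hgβ := hg₀ _ (hβ hs)
    exact mul_le_mul_of_nonneg_right (hfgh _ (hα hs) _ (hβ hs)) (by positivity)
  have hid : EqOn (fun s => ∫ r in ((a + c) / 2)..((α s + β s) / 2), h r) id (Ioo 0 I) := by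
    refine eqOn_id_of_monotoneOn_sub_id (monotoneOn_of_hasDerivWithinAt_nonneg (convex_Ioo 0 I)
      (fun s hs => ((hderiv s hs).sub (hasDerivAt_id s)).continuousAt.continuousWithinAt)
      (fun s hs => ((hderiv s (interior_subset hs)).sub (hasDerivAt_id s)).hasDerivWithinAt)
      fun s hs => ?_) fun s hs => ⟨?_, ?_⟩
    · have hs := interior_subset hs
      exact sub_nonneg.2 ((one_le_sqrt_mul_mul_inv_add_inv_div_two (hf₀ _ (hα hs))
        (hg₀ _ (hβ hs))).trans (hle s hs))
    · exact intervalIntegral.integral_nonneg (hz s hs).1.le fun u _ => hh₀ u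
    · exact (intervalIntegral.integral_mono_interval le_rfl (hz s hs).1.le (hz s hs).2.le
        (Filter.Eventually.of_forall hh₀) hhi).trans hhI
  intro s hs
  have hone : h ((α s + β s) / 2) * (((f (α s))⁻¹ + (g (β s))⁻¹) / 2) = 1 :=
    (hderiv s hs).unique ((hasDerivAt_id s).congr_of_eventuallyEq
      (hid.eventuallyEq_of_mem (isOpen_Ioo.mem_nhds hs)))
  exact eq_of_sqrt_mul_mul_inv_add_inv_div_two_le_one (hf₀ _ (hα hs)) (hg₀ _ (hβ hs))
    ((hle s hs).trans hone.le)

theorem exists_shift_of_prekopa_leindler_eq (hab : a < b) (hcd : c < d)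
    (hf : ContinuousOn f (Ioo a b)) (hg : ContinuousOn g (Ioo c d))
    (hh : ContinuousOn h (Ioo ((a + c) / 2) ((b + d) / 2)))
    (hf₀ : ∀ x ∈ Ioo a b, 0 < f x) (hg₀ : ∀ y ∈ Ioo c d, 0 < g y) (hh₀ : ∀ x, 0 ≤ h x)
    (hfi : IntervalIntegrable f volume a b) (hgi : IntervalIntegrable g volume c d)
    (hhi : IntervalIntegrable h volume ((a + c) / 2) ((b + d) / 2))
    (hfg : ∫ x in a..b, f x = ∫ y in c..d, g y)
    (hhf : ∫ x in ((a + c) / 2)..((b + d) / 2), h x ≤ ∫ x in a..b, f x)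
    (hfgh : ∀ x ∈ Ioo a b, ∀ y ∈ Ioo c d, √(f x * g y) ≤ h ((x + y) / 2)) :
    ∃ e : ℝ, c = a + e ∧ d = b + e ∧ ∀ x ∈ Ioo a b, f x = g (x + e) := by
  obtain ⟨α, hα, hα'⟩ := exists_quantile hab hf hf₀ hfi
  obtain ⟨β, hβ, hβ'⟩ := exists_quantile hcd hg hg₀ hgi
  rw [← hfg] at hβ hβ'
  have hfαgβ := comp_eqOn_comp_of_prekopa_leindler_eq hα.mapsTo hβ.mapsTo hα' hβ' hf₀ hg₀ hh₀ hh
    hhi hhf hfgh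
  obtain ⟨e, he⟩ : ∃ e, ∀ s ∈ Ioo 0 (∫ x in a..b, f x), β s - α s = e := by
    have hderiv : ∀ s ∈ Ioo 0 (∫ x in a..b, f x), HasDerivAt (fun s => β s - α s) 0 s :=
      fun s hs => by
        have hfg := hfαgβ hs
        simp only [Function.comp_apply] at hfg
        simpa [hfg] using (hβ' s hs).fun_sub (hα' s hs)
    exact isOpen_Ioo.exists_is_const_of_deriv_eq_zero isPreconnected_Ioo
      (fun s hs => (hderiv s hs).differentiableAt.differentiableWithinAt)
      fun s hs => (hderiv s hs).deriv
  have hβα : EqOn β (fun s => α s + e) (Ioo 0 (∫ x in a..b, f x)) := fun s hs =>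
    (sub_eq_iff_eq_add'.1 (he s hs))
  have himage : Ioo c d = Ioo (a + e) (b + e) := by
    rw [← hβ.image_eq, hβα.image_eq, ← image_add_const_Ioo, ← hα.image_eq, image_image]
  have hca : c = a + e := by
    rw [← csInf_Ioo hcd, himage, csInf_Ioo (by linarith)]
  have hdb : d = b + e := by
    rw [← csSup_Ioo hcd, himage, csSup_Ioo (by linarith)]
  refine ⟨e, hca, hdb, fun x hx => ?_⟩
  obtain ⟨s, hs, rfl⟩ := hα.surjOn hx
  simpa [hβα hs] using hfαgβ hs

end EqualityCase

/-! ### Hyperplane sections -/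

section CrossSection

variable {E : Type*} [NormedAddCommGroup E] [InnerProductSpace ℝ E] {u : E} {S : Set E}

/-- The section of `S` by the hyperplane `{x | ⟪x, u⟫ = s}`, where `‖u‖ = 1`, moved into the
parallel hyperplane `(ℝ ∙ u)ᗮ` through the origin by orthogonal projection. -/
def crossSection (u : E) (S : Set E) (s : ℝ) : Set (ℝ ∙ u)ᗮ :=
  {y | s • u + (y : E) ∈ S}

theorem mem_crossSection {s : ℝ} {y : (ℝ ∙ u)ᗮ} :
    y ∈ crossSection u S s ↔ s • u + (y : E) ∈ S :=
  Iff.rfl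

theorem inner_smul_add_coe_self (hu : ‖u‖ = 1) (s : ℝ) (y : (ℝ ∙ u)ᗮ) :
    ⟪s • u + (y : E), u⟫ = s := by
  have hy : ⟪(y : E), u⟫ = 0 := Submodule.mem_orthogonal_singleton_iff_inner_left.1 y.2
  rw [inner_add_left, real_inner_smul_left, real_inner_self_eq_norm_sq, hu, hy]
  ring

theorem inner_smul_add_orthogonalProjectionOnto (hu : ‖u‖ = 1) (x : E) :
    ⟪x, u⟫ • u + ((ℝ ∙ u)ᗮ.orthogonalProjectionOnto x : E) = x := by
  rw [← Submodule.starProjection_apply, Submodule.starProjection_orthogonal_val,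
    Submodule.starProjection_unit_singleton ℝ hu, real_inner_comm, add_sub_cancel]

theorem isometry_smul_add_coe (u : E) (s : ℝ) : Isometry fun y : (ℝ ∙ u)ᗮ => s • u + (y : E) :=
  (isometry_add_left _).comp (Submodule.subtypeₗᵢ _).isometry

theorem image_crossSection (hu : ‖u‖ = 1) (S : Set E) (s : ℝ) :
    (fun y : (ℝ ∙ u)ᗮ => s • u + (y : E)) '' crossSection u S s = {x ∈ S | ⟪x, u⟫ = s} := by
  ext x
  constructor
  · rintro ⟨y, hy, rfl⟩
    exact ⟨hy, inner_smul_add_coe_self hu s y⟩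
  · rintro ⟨hx, rfl⟩
    refine ⟨(ℝ ∙ u)ᗮ.orthogonalProjectionOnto x, ?_, inner_smul_add_orthogonalProjectionOnto hu x⟩
    rwa [mem_crossSection, inner_smul_add_orthogonalProjectionOnto hu]

theorem crossSection_nonempty_iff (hu : ‖u‖ = 1) {s : ℝ} :
    (crossSection u S s).Nonempty ↔ ∃ x ∈ S, ⟪x, u⟫ = s := by
  rw [← image_nonempty, image_crossSection hu]
  rfl

theorem smul_crossSection_add_subset {T : Set E} (a b s t : ℝ) :
    a • crossSection u S s + b • crossSection u T t ⊆
      crossSection u (a • S + b • T) (a * s + b * t) := by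
  rintro _ ⟨_, ⟨y, hy, rfl⟩, _, ⟨z, hz, rfl⟩, rfl⟩
  refine ⟨a • (s • u + (y : E)), smul_mem_smul_set hy, b • (t • u + (z : E)),
    smul_mem_smul_set hz, ?_⟩
  simp only [Submodule.coe_add, Submodule.coe_smul]
  module

theorem convex_crossSection (hS : Convex ℝ S) (u : E) (s : ℝ) : Convex ℝ (crossSection u S s) :=
  hS.affine_preimage
    (AffineMap.const ℝ (ℝ ∙ u)ᗮ (s • u) + (ℝ ∙ u)ᗮ.subtype.toAffineMap)

theorem measurableSet_crossSection [MeasurableSpace E] [BorelSpace E] (hS : MeasurableSet S) (u : E)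
    (s : ℝ) : MeasurableSet (crossSection u S s) :=
  (isometry_smul_add_coe u s).continuous.measurable hS

section Measure

variable [FiniteDimensional ℝ E]

theorem isCompact_crossSection (hS : IsCompact S) (u : E) (s : ℝ) :
    IsCompact (crossSection u S s) :=
  (isometry_smul_add_coe u s).isClosedEmbedding.isCompact_preimage hS

variable [MeasurableSpace E] [BorelSpace E]

theorem measurePreserving_smul_add_coe (hu : ‖u‖ = 1) :
    MeasurePreserving fun p : ℝ × (ℝ ∙ u)ᗮ => p.1 • u + (p.2 : E) :=
  (ℝ ∙ u).orthogonalDecomposition.symm.measurePreserving.comp <|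
    (WithLp.volume_preserving_toLp _ _).comp <|
      ((LinearIsometryEquiv.toSpanUnitSingleton (𝕜 := ℝ) u hu).measurePreserving).prod
        (MeasurePreserving.id volume)

theorem measurable_volume_crossSection (hu : ‖u‖ = 1) (hS : MeasurableSet S) :
    Measurable fun s => volume (crossSection u S s) :=
  measurable_measure_prodMk_left ((measurePreserving_smul_add_coe hu).measurable hS)

theorem volume_eq_lintegral_crossSection (hu : ‖u‖ = 1) (hS : MeasurableSet S) :
    volume S = ∫⁻ s, volume (crossSection u S s) := by
  have hmp := measurePreserving_smul_add_coe hu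
  rw [← hmp.measure_preimage hS.nullMeasurableSet, Measure.volume_eq_prod,
    Measure.prod_apply (hmp.measurable hS)]
  rfl

theorem integrable_volume_crossSection (hu : ‖u‖ = 1) (hS : MeasurableSet S)
    (hS' : volume S ≠ ∞) : Integrable fun s => volume.real (crossSection u S s) :=
  integrable_toReal_of_lintegral_ne_top (measurable_volume_crossSection hu hS).aemeasurable
    (by rwa [← volume_eq_lintegral_crossSection hu hS])

theorem volume_real_eq_integral_crossSection (hu : ‖u‖ = 1) (hS : IsCompact S) :
    volume.real S = ∫ s, volume.real (crossSection u S s) := by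
  rw [measureReal_def, volume_eq_lintegral_crossSection hu hS.measurableSet]
  exact (integral_toReal (measurable_volume_crossSection hu hS.measurableSet).aemeasurable
    (ae_of_all _ fun s => (isCompact_crossSection hS u s).measure_lt_top)).symm

theorem setIntegral_inner_eq_integral_crossSection (hu : ‖u‖ = 1) (hS : IsCompact S) :
    ∫ x in S, ⟪x, u⟫ = ∫ s, s * volume.real (crossSection u S s) := by
  have hmp := measurePreserving_smul_add_coe hu
  have hint : Integrable (S.indicator fun x : E => ⟪x, u⟫) := by
    rw [integrable_indicator_iff hS.measurableSet]
    exact (Continuous.continuousOn (by fun_prop)).integrableOn_compact hS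
  have hsection : ∀ (s : ℝ) (y : (ℝ ∙ u)ᗮ), S.indicator (fun x : E => ⟪x, u⟫) (s • u + (y : E)) =
      (crossSection u S s).indicator (fun _ => s) y := fun s y => by
    classical
    simp only [indicator_apply, mem_crossSection, inner_smul_add_coe_self hu]
  calc ∫ x in S, ⟪x, u⟫
      = ∫ p : ℝ × (ℝ ∙ u)ᗮ, S.indicator (fun x => ⟪x, u⟫) (p.1 • u + (p.2 : E)) := by
        rw [← integral_indicator hS.measurableSet, ← hmp.map_eq,
          integral_map hmp.measurable.aemeasurable (hmp.map_eq.symm ▸ hint.aestronglyMeasurable)]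
    _ = ∫ s : ℝ, ∫ y : (ℝ ∙ u)ᗮ, S.indicator (fun x => ⟪x, u⟫) (s • u + (y : E)) :=
        integral_prod _ (hmp.integrable_comp_of_integrable hint)
    _ = ∫ s, s * volume.real (crossSection u S s) := by
        refine integral_congr_ae (ae_of_all _ fun s => ?_)
        refine (integral_congr_ae (ae_of_all _ (hsection s))).trans ?_
        rw [integral_indicator (measurableSet_crossSection hS.measurableSet u s), setIntegral_const,
          smul_eq_mul, mul_comm]

theorem exists_hausdorffMeasure_section_eq (d : ℕ) : ∃ c : ℝ, 0 < c ∧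
    ∀ u : E, ‖u‖ = 1 → Module.finrank ℝ (ℝ ∙ u)ᗮ = d → ∀ (S : Set E) (s : ℝ),
      μH[(d : ℝ)] {x ∈ S | ⟪x, u⟫ = s} = ENNReal.ofReal c * volume (crossSection u S s) := by
  obtain ⟨r, hr⟩ : ∃ r, r = Measure.addHaarScalarFactor
    (volume : Measure (EuclideanSpace ℝ (Fin d))) μH[d] := ⟨_, rfl⟩
  have hr₀ : r ≠ 0 := hr ▸ Measure.addHaarScalarFactor_volume_hausdorffMeasure_ne_zero d
  refine ⟨r⁻¹, by positivity, fun u hu hd S s => ?_⟩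
  have hvol : volume (crossSection u S s) = r * μH[(d : ℝ)] (crossSection u S s) := by
    rw [← InnerProductSpace.euclideanHausdorffMeasure_eq_volume, hd,
      Measure.euclideanHausdorffMeasure_def, ← hr]
    rfl
  rw [← image_crossSection hu, (isometry_smul_add_coe u s).hausdorffMeasure_image
    (Or.inl d.cast_nonneg), hvol, ← mul_assoc, ← NNReal.coe_inv, ENNReal.ofReal_coe_nnreal,
    ← ENNReal.coe_mul, inv_mul_cancel₀ hr₀, ENNReal.coe_one, one_mul]

end Measure

end CrossSection

/-! ### The Brunn–Minkowski inequality -/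

section BrunnMinkowski

variable {E : Type*} [NormedAddCommGroup E] [InnerProductSpace ℝ E] [FiniteDimensional ℝ E]
  [MeasurableSpace E] [BorelSpace E] {u : E} {a b : ℝ}

theorem bddAbove_range_volume_crossSection {K : Set E} (hK : IsCompact K) (u : E) :
    BddAbove (range fun s => volume.real (crossSection u K s)) := by
  refine ⟨volume.real ((ℝ ∙ u)ᗮ.orthogonalProjectionOnto '' K), ?_⟩
  rintro _ ⟨s, rfl⟩
  refine measureReal_mono ?_ (hK.image (by fun_prop)).measure_ne_top
  intro y hy
  refine ⟨_, hy, ?_⟩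
  have hu₀ : (ℝ ∙ u)ᗮ.orthogonalProjectionOnto u = 0 :=
    Submodule.orthogonalProjectionOnto_orthogonalComplement_singleton_eq_zero u
  simp [hu₀]

theorem lintegral_ofReal_volume_crossSection {K : Set E} (hK : IsCompact K) (hu : ‖u‖ = 1) :
    ∫⁻ s, ENNReal.ofReal (volume.real (crossSection u K s)) = volume K := by
  rw [volume_eq_lintegral_crossSection hu hK.measurableSet]
  exact lintegral_congr fun s => ofReal_measureReal (isCompact_crossSection hK u s).measure_ne_top

theorem volume_rpow_mul_volume_rpow_le (ha : 0 < a) (hb : 0 < b) (hab : a + b = 1) {K L : Set E}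
    (hK : IsCompact K) (hL : IsCompact L) :
    volume K ^ a * volume L ^ b ≤ volume (a • K + b • L) := by
  induction hd : Module.finrank ℝ E generalizing E with
  | zero =>
    have := Module.finrank_zero_iff.1 hd
    rcases K.eq_empty_or_nonempty with rfl | hK₀
    · simp [ha]
    rcases L.eq_empty_or_nonempty with rfl | hL₀
    · simp [hb]
    rw [hK₀.eq_univ, hL₀.eq_univ, (univ_nonempty.smul_set.add univ_nonempty.smul_set).eq_univ,
      ← ENNReal.rpow_add_of_nonneg _ _ ha.le hb.le, hab, ENNReal.rpow_one]
  | succ d ih =>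
    have : Fact (Module.finrank ℝ E = d + 1) := ⟨hd⟩
    have : Nontrivial E := Module.nontrivial_of_finrank_pos (R := ℝ) (hd ▸ d.succ_pos)
    obtain ⟨u, hu⟩ := exists_norm_eq E zero_le_one
    have hM := (hK.smul a).add (hL.smul b)
    have hmeas : ∀ {S : Set E}, IsCompact S →
        Measurable fun s => volume.real (crossSection u S s) := fun hS =>
      (measurable_volume_crossSection hu hS.measurableSet).ennreal_toReal
    rw [← lintegral_ofReal_volume_crossSection hK hu, ← lintegral_ofReal_volume_crossSection hL hu,
      ← lintegral_ofReal_volume_crossSection hM hu]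
    refine prekopa_leindler ha hb hab (hmeas hK) (hmeas hL) (hmeas hM)
      (fun _ => measureReal_nonneg) (fun _ => measureReal_nonneg) (fun _ => measureReal_nonneg)
      (bddAbove_range_volume_crossSection hK u) (bddAbove_range_volume_crossSection hL u)
      fun x y _ _ => ?_
    have hsections := (ih (isCompact_crossSection hK u x) (isCompact_crossSection hL u y)
      (Submodule.finrank_orthogonal_span_singleton (norm_ne_zero_iff.1 (hu ▸ one_ne_zero)))).trans
      (measure_mono (smul_crossSection_add_subset a b x y))
    simpa only [measureReal_def, ENNReal.toReal_mul, ENNReal.toReal_rpow] using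
      ENNReal.toReal_mono (isCompact_crossSection hM u _).measure_ne_top hsections

theorem volume_real_rpow_mul_volume_real_rpow_le (ha : 0 < a) (hb : 0 < b) (hab : a + b = 1)
    {K L : Set E} (hK : IsCompact K) (hL : IsCompact L) :
    volume.real K ^ a * volume.real L ^ b ≤ volume.real (a • K + b • L) := by
  simpa only [measureReal_def, ENNReal.toReal_mul, ENNReal.toReal_rpow] using
    ENNReal.toReal_mono ((hK.smul a).add (hL.smul b)).measure_ne_top
      (volume_rpow_mul_volume_rpow_le ha hb hab hK hL)

theorem volume_real_crossSection_rpow_mul_le (ha : 0 < a) (hb : 0 < b) (hab : a + b = 1)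
    {K L : Set E} (hK : IsCompact K) (hL : IsCompact L) (u : E) (s t : ℝ) :
    volume.real (crossSection u K s) ^ a * volume.real (crossSection u L t) ^ b ≤
      volume.real (crossSection u (a • K + b • L) (a * s + b * t)) :=
  (volume_real_rpow_mul_volume_real_rpow_le ha hb hab (isCompact_crossSection hK u s)
    (isCompact_crossSection hL u t)).trans (measureReal_mono (smul_crossSection_add_subset a b s t)
      (isCompact_crossSection ((hK.smul a).add (hL.smul b)) u _).measure_ne_top)

end BrunnMinkowski

section ConvexSections

variable {E : Type*} [NormedAddCommGroup E] [InnerProductSpace ℝ E] {u : E} {a b : ℝ} {K L : Set E}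

/-- The property `IsConvexBody` for subsets of an arbitrary inner product space: compact and convex
with nonempty interior. -/
structure IsSolidBody (K : Set E) : Prop where
  convex : Convex ℝ K
  isCompact : IsCompact K
  interior_nonempty : (interior K).Nonempty

theorem IsSolidBody.nonempty (hK : IsSolidBody K) : K.Nonempty :=
  hK.interior_nonempty.mono interior_subset

theorem IsSolidBody.smul_add_smul (hK : IsSolidBody K) (hL : IsSolidBody L) (ha : a ≠ 0) (b : ℝ) :
    IsSolidBody (a • K + b • L) where
  convex := (hK.convex.smul a).add (hL.convex.smul b)
  isCompact := (hK.isCompact.smul a).add (hL.isCompact.smul b)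
  interior_nonempty := by
    have hne : (a • interior K + b • L).Nonempty :=
      hK.interior_nonempty.smul_set.add hL.nonempty.smul_set
    refine hne.mono (interior_maximal ?_ ?_)
    · exact add_subset_add (smul_set_mono interior_subset) le_rfl
    · exact (isOpen_interior.smul₀ ha).add_right

theorem inner_lt_of_mem_interior (hu : u ≠ 0) (hb : b ∈ upperBounds ((⟪·, u⟫) '' K)) {x : E}
    (hx : x ∈ interior K) : ⟪x, u⟫ < b := by
  have hnear : ∀ᶠ t in 𝓝 (0 : ℝ), x + t • u ∈ K := by
    have hcont : ContinuousAt (fun t : ℝ => x + t • u) 0 := by fun_prop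
    exact hcont.eventually_mem (by simpa using mem_interior_iff_mem_nhds.1 hx)
  obtain ⟨t, htK, ht⟩ := ((hnear.filter_mono nhdsWithin_le_nhds).and
    (self_mem_nhdsWithin : Ioi (0 : ℝ) ∈ 𝓝[>] 0)).exists
  calc ⟪x, u⟫ < ⟪x + t • u, u⟫ := by
        rw [inner_add_left, real_inner_smul_left]
        exact lt_add_of_pos_right _ (mul_pos ht (real_inner_self_pos.2 hu))
    _ ≤ b := hb (mem_image_of_mem _ htK)

theorem IsSolidBody.exists_isLeast_isGreatest_inner (hK : IsSolidBody K) (hu : u ≠ 0) :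
    ∃ a b, a < b ∧ IsLeast ((⟪·, u⟫) '' K) a ∧ IsGreatest ((⟪·, u⟫) '' K) b := by
  have hcompact : IsCompact ((⟪·, u⟫) '' K) := hK.isCompact.image (by fun_prop)
  have hne : ((⟪·, u⟫) '' K).Nonempty := hK.nonempty.image _
  obtain ⟨a, ha⟩ := hcompact.exists_isLeast hne
  obtain ⟨b, hb⟩ := hcompact.exists_isGreatest hne
  obtain ⟨z, hz⟩ := hK.interior_nonempty
  exact ⟨a, b, (ha.2 (mem_image_of_mem _ (interior_subset hz))).trans_lt
    (inner_lt_of_mem_interior hu hb.2 hz), ha, hb⟩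

theorem exists_mem_interior_inner_eq (hK : IsSolidBody K)
    (ha : a ∈ (⟪·, u⟫) '' K) (hb : b ∈ (⟪·, u⟫) '' K) {s : ℝ} (hs : s ∈ Ioo a b) :
    ∃ z ∈ interior K, ⟪z, u⟫ = s := by
  have hdense : K ⊆ closure (interior K) := by
    rw [hK.convex.closure_interior_eq_closure_of_nonempty_interior hK.interior_nonempty]
    exact subset_closure
  obtain ⟨x, hxK, rfl⟩ := ha
  obtain ⟨y, hyK, rfl⟩ := hb
  obtain ⟨x', hx', hx'K⟩ := mem_closure_iff.1 (hdense hxK) {z | ⟪z, u⟫ < s}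
    (isOpen_lt (by fun_prop) continuous_const) hs.1
  obtain ⟨y', hy', hy'K⟩ := mem_closure_iff.1 (hdense hyK) {z | s < ⟪z, u⟫}
    (isOpen_lt continuous_const (by fun_prop)) hs.2
  exact hK.convex.interior.isPreconnected.intermediate_value hx'K hy'K
    (Continuous.continuousOn (by fun_prop)) ⟨le_of_lt hx', le_of_lt hy'⟩

variable [FiniteDimensional ℝ E] [MeasurableSpace E] [BorelSpace E]

theorem IsSolidBody.volume_real_pos (hK : IsSolidBody K) : 0 < volume.real K :=
  ENNReal.toReal_pos (Measure.measure_pos_of_nonempty_interior _ hK.interior_nonempty).ne'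
    hK.isCompact.measure_ne_top

theorem volume_real_crossSection_pos (hu : ‖u‖ = 1) (hK : IsSolidBody K)
    (ha : a ∈ (⟪·, u⟫) '' K) (hb : b ∈ (⟪·, u⟫) '' K) {s : ℝ}
    (hs : s ∈ Ioo a b) : 0 < volume.real (crossSection u K s) := by
  have hopen : IsOpen (crossSection u (interior K) s) :=
    isOpen_interior.preimage (isometry_smul_add_coe u s).continuous
  have hne : (crossSection u (interior K) s).Nonempty :=
    (crossSection_nonempty_iff hu).2 (exists_mem_interior_inner_eq hK ha hb hs)
  refine ENNReal.toReal_pos ?_ (isCompact_crossSection hK.isCompact u s).measure_ne_top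
  exact ((hopen.measure_pos volume hne).trans_le
    (measure_mono (preimage_mono interior_subset))).ne'

theorem continuousOn_volume_real_crossSection (hu : ‖u‖ = 1) (hK : IsSolidBody K)
    (ha : a ∈ (⟪·, u⟫) '' K) (hb : b ∈ (⟪·, u⟫) '' K) :
    ContinuousOn (fun s => volume.real (crossSection u K s)) (Ioo a b) := by
  have hpos := fun s hs => volume_real_crossSection_pos hu hK ha hb (s := s) hs
  have hlog : ConcaveOn ℝ (Ioo a b) fun s => Real.log (volume.real (crossSection u K s)) := by
    refine concaveOn_iff_forall_pos.2 ⟨convex_Ioo a b, fun s hs t ht p q hp hq hpq => ?_⟩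
    have hle := volume_real_crossSection_rpow_mul_le hp hq hpq hK.isCompact hK.isCompact u s t
    rw [← hK.convex.add_smul hp.le hq.le, hpq, one_smul] at hle
    have hs₀ := hpos s hs
    have ht₀ := hpos t ht
    rw [smul_eq_mul, smul_eq_mul, ← Real.log_rpow hs₀, ← Real.log_rpow ht₀,
      ← Real.log_mul (by positivity) (by positivity)]
    exact Real.log_le_log (by positivity) hle
  exact (hlog.continuousOn isOpen_Ioo).rexp.congr fun s hs => (Real.exp_log (hpos s hs)).symm

end ConvexSections

section EqualityCase

variable {E : Type*} [NormedAddCommGroup E] [InnerProductSpace ℝ E] [FiniteDimensional ℝ E]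
  {u : E} {a b c d : ℝ} {K L : Set E}

theorem subset_of_upperBounds_inner_subset (hK : Convex ℝ K) (hKc : IsClosed K)
    (hKne : K.Nonempty)
    (hKL : ∀ u, ‖u‖ = 1 → upperBounds ((⟪·, u⟫) '' K) ⊆ upperBounds ((⟪·, u⟫) '' L)) : L ⊆ K := by
  intro x hx
  by_contra hxK
  obtain ⟨f, r, hfK, hfx⟩ := geometric_hahn_banach_closed_point hK hKc hxK
  set w := (InnerProductSpace.toDual ℝ E).symm f
  have hw : ∀ y, ⟪y, w⟫ = f y := fun y => by
    rw [real_inner_comm, InnerProductSpace.toDual_symm_apply]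
  have hw₀ : w ≠ 0 := by
    intro hw₀
    obtain ⟨y, hy⟩ := hKne
    have hyx := (hfK y hy).trans hfx
    simp only [← hw, hw₀, inner_zero_right, lt_self_iff_false] at hyx
  have hpos : 0 < ‖w‖⁻¹ := inv_pos.2 (norm_pos_iff.2 hw₀)
  have hbound := hKL (‖w‖⁻¹ • w) (norm_smul_inv_norm hw₀) (a := ‖w‖⁻¹ * r) (by
    rintro _ ⟨y, hy, rfl⟩
    simp only [real_inner_smul_right, hw]
    gcongr
    exact (hfK y hy).le) (mem_image_of_mem _ hx)
  simp only [real_inner_smul_right, hw] at hbound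
  exact hfx.not_ge (le_of_mul_le_mul_left hbound hpos)

variable [MeasurableSpace E] [BorelSpace E]

theorem volume_real_crossSection_eq_zero (hu : ‖u‖ = 1) (ha : a ∈ lowerBounds ((⟪·, u⟫) '' K))
    (hb : b ∈ upperBounds ((⟪·, u⟫) '' K)) {s : ℝ} (hs : s ∉ Icc a b) :
    volume.real (crossSection u K s) = 0 := by
  have hempty : crossSection u K s = ∅ := by
    rw [← not_nonempty_iff_eq_empty, crossSection_nonempty_iff hu]
    rintro ⟨x, hx, rfl⟩
    exact hs ⟨ha (mem_image_of_mem _ hx), hb (mem_image_of_mem _ hx)⟩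
  rw [hempty, measureReal_empty]

theorem intervalIntegral_volume_real_crossSection (hu : ‖u‖ = 1) (hK : IsCompact K) (hab : a ≤ b)
    (ha : a ∈ lowerBounds ((⟪·, u⟫) '' K)) (hb : b ∈ upperBounds ((⟪·, u⟫) '' K)) :
    ∫ s in a..b, volume.real (crossSection u K s) = volume.real K := by
  rw [volume_real_eq_integral_crossSection hu hK, intervalIntegral.integral_of_le hab,
    ← integral_Icc_eq_integral_Ioc]
  exact setIntegral_eq_integral_of_forall_compl_eq_zero fun s =>
    volume_real_crossSection_eq_zero hu ha hb

theorem sqrt_volume_real_crossSection_mul_le (hK : IsCompact K) (hL : IsCompact L) (u : E)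
    (s t : ℝ) : √(volume.real (crossSection u K s) * volume.real (crossSection u L t)) ≤
      volume.real (crossSection u ((1 / 2 : ℝ) • K + (1 / 2 : ℝ) • L) ((s + t) / 2)) := by
  have hle := volume_real_crossSection_rpow_mul_le (a := 1 / 2) (b := 1 / 2) (by norm_num)
    (by norm_num) (by norm_num) hK hL u s t
  rw [Real.sqrt_eq_rpow, Real.mul_rpow measureReal_nonneg measureReal_nonneg]
  convert hle using 3
  ring

theorem exists_volume_real_crossSection_add_eq (hu : ‖u‖ = 1) (hK : IsSolidBody K)
    (hL : IsSolidBody L) (hKL : volume.real K = volume.real L)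
    (hmid : volume.real ((1 / 2 : ℝ) • K + (1 / 2 : ℝ) • L) ≤ volume.real K) (hab : a < b)
    (hcd : c < d) (ha : IsLeast ((⟪·, u⟫) '' K) a) (hb : IsGreatest ((⟪·, u⟫) '' K) b)
    (hc : IsLeast ((⟪·, u⟫) '' L) c) (hd : IsGreatest ((⟪·, u⟫) '' L) d) :
    ∃ e, c = a + e ∧ d = b + e ∧
      ∀ s, s ≠ a → s ≠ b → volume.real (crossSection u K s) =
        volume.real (crossSection u L (s + e)) := by
  set M := (1 / 2 : ℝ) • K + (1 / 2 : ℝ) • L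
  have hM : IsSolidBody M := hK.smul_add_smul hL (by norm_num) _
  have hmem : ∀ {s t : ℝ}, s ∈ (⟪·, u⟫) '' K → t ∈ (⟪·, u⟫) '' L →
      (s + t) / 2 ∈ (⟪·, u⟫) '' M := by
    rintro _ _ ⟨x, hx, rfl⟩ ⟨y, hy, rfl⟩
    refine ⟨_, add_mem_add (smul_mem_smul_set hx) (smul_mem_smul_set hy), ?_⟩
    simp only [inner_add_left, real_inner_smul_left]
    ring
  have hintegrable : ∀ {S : Set E}, IsCompact S → Integrable fun s =>
      volume.real (crossSection u S s) := fun hS =>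
    integrable_volume_crossSection hu hS.measurableSet hS.measure_ne_top
  have hVK := intervalIntegral_volume_real_crossSection hu hK.isCompact hab.le ha.2 hb.2
  have hVL := intervalIntegral_volume_real_crossSection hu hL.isCompact hcd.le hc.2 hd.2
  obtain ⟨e, hce, hde, he⟩ := exists_shift_of_prekopa_leindler_eq hab hcd
    (continuousOn_volume_real_crossSection hu hK ha.1 hb.1)
    (continuousOn_volume_real_crossSection hu hL hc.1 hd.1)
    (continuousOn_volume_real_crossSection hu hM (hmem ha.1 hc.1) (hmem hb.1 hd.1))
    (fun s => volume_real_crossSection_pos hu hK ha.1 hb.1)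
    (fun s => volume_real_crossSection_pos hu hL hc.1 hd.1)
    (fun s => measureReal_nonneg) (hintegrable hK.isCompact).intervalIntegrable
    (hintegrable hL.isCompact).intervalIntegrable (hintegrable hM.isCompact).intervalIntegrable
    (by rw [hVK, hVL, hKL])
    (by
      rw [hVK, intervalIntegral.integral_of_le (by linarith)]
      refine le_trans ?_ hmid
      rw [volume_real_eq_integral_crossSection hu hM.isCompact]
      exact setIntegral_le_integral (hintegrable hM.isCompact)
        (.of_forall fun _ => measureReal_nonneg))
    fun s _ t _ => sqrt_volume_real_crossSection_mul_le hK.isCompact hL.isCompact u s t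
  refine ⟨e, hce, hde, fun s hsa hsb => ?_⟩
  by_cases hs : s ∈ Icc a b
  · exact he s ⟨hs.1.lt_of_ne' hsa, hs.2.lt_of_ne hsb⟩
  · rw [volume_real_crossSection_eq_zero hu ha.2 hb.2 hs,
      volume_real_crossSection_eq_zero hu hc.2 hd.2]
    rwa [hce, hde, add_mem_Icc_iff_left, add_sub_cancel_right, add_sub_cancel_right]

theorem inner_setIntegral_id (hK : IsCompact K) (u : E) :
    ⟪∫ x in K, x, u⟫ = ∫ x in K, ⟪x, u⟫ := by
  rw [real_inner_comm, ← integral_inner (f := fun x : E => x)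
    (continuousOn_id.integrableOn_compact hK)]
  simp only [real_inner_comm]

theorem integrable_mul_volume_real_crossSection (hu : ‖u‖ = 1) (hK : IsCompact K) :
    Integrable fun s => s * volume.real (crossSection u K s) := by
  have himage : IsCompact ((⟪·, u⟫) '' K) := hK.image (by fun_prop)
  obtain ⟨a, ha⟩ := himage.bddBelow
  obtain ⟨b, hb⟩ := himage.bddAbove
  rw [← integrableOn_iff_integrable_of_support_subset (s := Icc a b)]
  · exact (integrable_volume_crossSection hu hK.measurableSet
      hK.measure_ne_top).integrableOn.continuousOn_mul continuousOn_id isCompact_Icc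
  · refine Function.support_subset_iff'.2 fun s hs => ?_
    rw [volume_real_crossSection_eq_zero hu ha hb hs, mul_zero]

theorem inner_setIntegral_id_of_crossSection_add_eq (hu : ‖u‖ = 1) (hK : IsCompact K)
    (hL : IsCompact L) {e : ℝ} (he : ∀ᵐ s, volume.real (crossSection u K s) =
      volume.real (crossSection u L (s + e))) :
    ⟪∫ x in L, x, u⟫ = ⟪∫ x in K, x, u⟫ + e * volume.real K := by
  rw [inner_setIntegral_id hL, inner_setIntegral_id hK,
    setIntegral_inner_eq_integral_crossSection hu hL,
    setIntegral_inner_eq_integral_crossSection hu hK, volume_real_eq_integral_crossSection hu hK,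
    ← integral_add_right_eq_self _ e, ← integral_const_mul, ← integral_add
      (integrable_mul_volume_real_crossSection hu hK)
      ((integrable_volume_crossSection hu hK.measurableSet hK.measure_ne_top).const_mul e)]
  refine integral_congr_ae ?_
  filter_upwards [he] with s hs
  rw [hs]
  ring

/- The translation vector is the difference of the centroids: in every direction `u` the profiles of
the sections of `K` and `L` differ by a shift, which the first moments compute. -/
theorem IsSolidBody.exists_eq_vadd_of_volume_midpoint_le (hK : IsSolidBody K) (hL : IsSolidBody L)
    (hKL : volume.real K = volume.real L)
    (hmid : volume.real ((1 / 2 : ℝ) • K + (1 / 2 : ℝ) • L) ≤ volume.real K) :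
    ∃ v : E, L = v +ᵥ K := by
  have hV := hK.volume_real_pos
  set v := (volume.real K)⁻¹ • ((∫ x in L, x) - ∫ x in K, x) with hv
  have hsupport : ∀ u : E, ‖u‖ = 1 →
      upperBounds ((⟪·, u⟫) '' L) = upperBounds ((⟪·, u⟫) '' (v +ᵥ K)) := by
    intro u hu
    have hu₀ : u ≠ 0 := norm_ne_zero_iff.1 (hu ▸ one_ne_zero)
    obtain ⟨a, b, hab, ha, hb⟩ := hK.exists_isLeast_isGreatest_inner hu₀
    obtain ⟨c, d, hcd, hc, hd⟩ := hL.exists_isLeast_isGreatest_inner hu₀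
    obtain ⟨e, -, hde, he⟩ :=
      exists_volume_real_crossSection_add_eq hu hK hL hKL hmid hab hcd ha hb hc hd
    have hae : ∀ᵐ s, volume.real (crossSection u K s) = volume.real (crossSection u L (s + e)) := by
      filter_upwards [volume.ae_ne a, volume.ae_ne b] using he
    have hmoment :=
      inner_setIntegral_id_of_crossSection_add_eq hu hK.isCompact hL.isCompact hae
    have hve : ⟪v, u⟫ = e := by
      rw [hv, real_inner_smul_left, inner_sub_left, hmoment]
      field_simp
      ring
    have hbv : IsGreatest ((⟪·, u⟫) '' (v +ᵥ K)) (b + e) := by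
      obtain ⟨⟨x, hx, rfl⟩, hmax⟩ := hb
      refine ⟨⟨v +ᵥ x, vadd_mem_vadd_set hx, ?_⟩, ?_⟩
      · simp only [vadd_eq_add, inner_add_left, hve, add_comm]
      · rintro _ ⟨_, ⟨y, hy, rfl⟩, rfl⟩
        simp only [vadd_eq_add, inner_add_left, hve]
        rw [add_comm]
        exact add_le_add_left (hmax (mem_image_of_mem _ hy)) e
    rw [hd.upperBounds_eq, hbv.upperBounds_eq, hde]
  refine ⟨v, ?_⟩
  exact (subset_of_upperBounds_inner_subset (hK.convex.vadd v) (hK.isCompact.vadd v).isClosed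
    hK.nonempty.vadd_set
    fun u hu => (hsupport u hu).ge).antisymm
    (subset_of_upperBounds_inner_subset hL.convex hL.isCompact.isClosed
      hL.nonempty fun u hu => (hsupport u hu).le)

end EqualityCase

/-! ### Polyhedra with prescribed normals -/

/-- The polyhedron with normals `n` and support numbers `h`. -/
def polyhedron {E ι : Type*} [NormedAddCommGroup E] [InnerProductSpace ℝ E] (n : ι → E)
    (h : ι → ℝ) : Set E :=
  {x | ∀ i, ⟪x, n i⟫ ≤ h i}

/-- The positive hull of the vectors `n i` is the whole space. This is expressed in the dual and
quantitative form which bounds the polyhedra with normals `n`. -/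
def PositivelySpans {E ι : Type*} [NormedAddCommGroup E] [InnerProductSpace ℝ E] (n : ι → E) :
    Prop :=
  ∃ c > 0, ∀ x, ∃ j, c * ‖x‖ ≤ ⟪x, n j⟫

section Polyhedron

variable {E ι : Type*} [NormedAddCommGroup E] [InnerProductSpace ℝ E] {n : ι → E} {h q : ι → ℝ}

theorem mem_polyhedron {x : E} : x ∈ polyhedron n h ↔ ∀ i, ⟪x, n i⟫ ≤ h i :=
  Iff.rfl

theorem polyhedron_eq_iInter : polyhedron n h = ⋂ i, {x | ⟪x, n i⟫ ≤ h i} :=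
  Set.ofPred_forall _

theorem polyhedron_mono (hhq : h ≤ q) : polyhedron n h ⊆ polyhedron n q :=
  fun _ hx i => (hx i).trans (hhq i)

theorem isClosed_polyhedron : IsClosed (polyhedron n h) := by
  rw [polyhedron_eq_iInter]
  exact isClosed_iInter fun i => isClosed_le (by fun_prop) continuous_const

theorem convex_setOf_inner_le (u : E) (c : ℝ) : Convex ℝ {x : E | ⟪x, u⟫ ≤ c} :=
  convex_halfSpace_le ⟨fun x y => inner_add_left x y u,
    fun t x => real_inner_smul_left x u t⟩ c

theorem convex_polyhedron : Convex ℝ (polyhedron n h) := by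
  rw [polyhedron_eq_iInter]
  exact convex_iInter fun i => convex_setOf_inner_le (n i) (h i)

theorem isBounded_polyhedron [Finite ι] (hn : PositivelySpans n) (h : ι → ℝ) :
    Bornology.IsBounded (polyhedron n h) := by
  obtain ⟨c, hc, hcn⟩ := hn
  obtain ⟨R, hR⟩ := (Set.finite_range h).bddAbove
  refine (Metric.isBounded_closedBall (x := (0 : E)) (r := R / c)).subset fun x hx => ?_
  obtain ⟨j, hj⟩ := hcn x
  rw [mem_closedBall_zero_iff, le_div_iff₀ hc, mul_comm]
  exact hj.trans ((hx j).trans (hR ⟨j, rfl⟩))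

theorem isCompact_polyhedron [Finite ι] [FiniteDimensional ℝ E] (hn : PositivelySpans n)
    (h : ι → ℝ) : IsCompact (polyhedron n h) :=
  Metric.isCompact_of_isClosed_isBounded isClosed_polyhedron (isBounded_polyhedron hn h)

theorem inner_lt_of_mem_interior_polyhedron {i : ι} (hi : n i ≠ 0) {x : E}
    (hx : x ∈ interior (polyhedron n h)) : ⟪x, n i⟫ < h i :=
  inner_lt_of_mem_interior hi (by rintro _ ⟨y, hy, rfl⟩; exact hy i) hx

theorem polyhedron_mem_nhds [Finite ι] {x : E} (hx : ∀ i, ⟪x, n i⟫ < h i) :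
    polyhedron n h ∈ 𝓝 x := by
  have hopen : ∀ i, ∀ᶠ y in 𝓝 x, ⟪y, n i⟫ < h i := fun i =>
    (show Continuous fun y : E => ⟪y, n i⟫ by fun_prop).continuousAt.eventually
      (gt_mem_nhds (hx i))
  filter_upwards [Filter.eventually_all.2 hopen] with y hy using fun i => (hy i).le

theorem polyhedron_smul {t : ℝ} (ht : 0 < t) : polyhedron n (t • h) = t • polyhedron n h := by
  ext x
  rw [mem_smul_set_iff_inv_smul_mem₀ ht.ne']
  simp only [mem_polyhedron, real_inner_smul_left, Pi.smul_apply, smul_eq_mul, inv_mul_le_iff₀ ht]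

theorem polyhedron_add_inner (v : E) :
    polyhedron n (h + fun i => ⟪v, n i⟫) = v +ᵥ polyhedron n h := by
  ext x
  simp only [mem_vadd_set_iff_neg_vadd_mem, mem_polyhedron, vadd_eq_add, Pi.add_apply,
    inner_add_left, inner_neg_left, neg_add_le_iff_le_add, add_comm (h _)]

theorem smul_polyhedron_add_subset {a b : ℝ} (ha : 0 ≤ a) (hb : 0 ≤ b) :
    a • polyhedron n h + b • polyhedron n q ⊆ polyhedron n (a • h + b • q) := by
  rintro _ ⟨_, ⟨x, hx, rfl⟩, _, ⟨y, hy, rfl⟩, rfl⟩ i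
  simp only [inner_add_left, real_inner_smul_left, Pi.add_apply, Pi.smul_apply, smul_eq_mul]
  gcongr
  exacts [hx i, hy i]

theorem crossSection_polyhedron (u : E) (s : ℝ) :
    crossSection u (polyhedron n h) s =
      polyhedron (fun i => (ℝ ∙ u)ᗮ.orthogonalProjectionOnto (n i))
        fun i => h i - s * ⟪u, n i⟫ := by
  ext y
  simp only [mem_crossSection, mem_polyhedron, inner_add_left, real_inner_smul_left,
    Submodule.inner_orthogonalProjectionOnto_eq_of_mem_left, le_sub_iff_add_le']

theorem PositivelySpans.orthogonalProjectionOnto (hn : PositivelySpans n) (u : E) :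
    PositivelySpans fun i => (ℝ ∙ u)ᗮ.orthogonalProjectionOnto (n i) := by
  obtain ⟨c, hc, hcn⟩ := hn
  refine ⟨c, hc, fun y => ?_⟩
  simpa only [Submodule.inner_orthogonalProjectionOnto_eq_of_mem_left, Submodule.coe_norm]
    using hcn y

end Polyhedron

/-- The volume of the polyhedron with normals `n` as a function of its support numbers. -/
def polyVol {E ι : Type*} [NormedAddCommGroup E] [InnerProductSpace ℝ E] [FiniteDimensional ℝ E]
    [MeasurableSpace E] [BorelSpace E] (n : ι → E) (h : ι → ℝ) : ℝ :=
  volume.real (polyhedron n h)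

section PolyVol

variable {E ι : Type*} [NormedAddCommGroup E] [InnerProductSpace ℝ E] [FiniteDimensional ℝ E]
  [MeasurableSpace E] [BorelSpace E] {n : ι → E} {h q : ι → ℝ}

theorem polyVol_nonneg : 0 ≤ polyVol n h :=
  measureReal_nonneg

theorem polyVol_smul {t : ℝ} (ht : 0 < t) :
    polyVol n (t • h) = t ^ Module.finrank ℝ E * polyVol n h := by
  rw [polyVol, polyVol, polyhedron_smul ht, measureReal_def,
    Measure.addHaar_smul_of_nonneg volume ht.le, ENNReal.toReal_mul,
    ENNReal.toReal_ofReal (by positivity), measureReal_def]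

theorem polyVol_add_inner (v : E) : polyVol n (h + fun i => ⟪v, n i⟫) = polyVol n h := by
  rw [polyVol, polyhedron_add_inner, measureReal_def, measure_vadd]
  rfl

theorem isSolidBody_polyhedron [Finite ι] (hn : PositivelySpans n) (hh : 0 < polyVol n h) :
    IsSolidBody (polyhedron n h) where
  convex := convex_polyhedron
  isCompact := isCompact_polyhedron hn h
  interior_nonempty := by
    rw [nonempty_iff_ne_empty]
    intro hempty
    have hnull : volume (polyhedron n h) = 0 :=
      measure_mono_null (subset_closure.trans_eq (by rw [frontier, hempty, sdiff_empty]))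
        (convex_polyhedron.addHaar_frontier volume)
    exact hh.ne' (by rw [polyVol, measureReal_def, hnull, ENNReal.toReal_zero])

theorem polyVol_pos [Finite ι] (hn : PositivelySpans n)
    (hint : (interior (polyhedron n h)).Nonempty) : 0 < polyVol n h :=
  IsSolidBody.volume_real_pos ⟨convex_polyhedron, isCompact_polyhedron hn h, hint⟩

theorem ae_inner_ne {u : E} (hu : u ≠ 0) (c : ℝ) : ∀ᵐ x : E, ⟪x, u⟫ ≠ c := by
  refine measure_mono_null (fun x hx => ?_)
    ((convex_setOf_inner_le u c).addHaar_frontier (μ := volume))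
  have hxc : ⟪x, u⟫ = c := not_not.1 hx
  refine ⟨subset_closure hxc.le, fun hint => ?_⟩
  exact (inner_lt_of_mem_interior hu (by rintro _ ⟨y, hy, rfl⟩; exact hy) hint).ne hxc

theorem continuousAt_polyVol [Finite ι] (hn : PositivelySpans n) (hh : ∀ i, n i = 0 → h i ≠ 0) :
    ContinuousAt (polyVol n) h := by
  have hsubset : ∀ᶠ q in 𝓝 h, polyhedron n q ⊆ polyhedron n (h + 1) := by
    have hle : ∀ i, ∀ᶠ q : ι → ℝ in 𝓝 h, q i ≤ h i + 1 := fun i =>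
      (((continuous_apply i).tendsto h).eventually (gt_mem_nhds (lt_add_one (h i)))).mono
        fun q hq => hq.le
    filter_upwards [Filter.eventually_all.2 hle] with q hq using polyhedron_mono hq
  refine (ENNReal.tendsto_toReal (isCompact_polyhedron hn h).measure_ne_top).comp
    (tendsto_measure_of_ae_tendsto_indicator (𝓝 h) isClosed_polyhedron.measurableSet
    (fun q => isClosed_polyhedron.measurableSet) isClosed_polyhedron.measurableSet
    (isCompact_polyhedron hn (h + 1)).measure_ne_top hsubset ?_)
  have hae : ∀ i, ∀ᵐ x : E, ⟪x, n i⟫ ≠ h i := fun i => by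
    rcases eq_or_ne (n i) 0 with hi | hi
    · simp only [hi, inner_zero_right]
      exact .of_forall fun _ => (hh i hi).symm
    · exact ae_inner_ne hi (h i)
  filter_upwards [ae_all_iff.2 hae] with x hx
  have hstable : ∀ i, ∀ᶠ q : ι → ℝ in 𝓝 h, (⟪x, n i⟫ ≤ q i ↔ ⟪x, n i⟫ ≤ h i) := fun i => by
    have hi := (continuous_apply i).tendsto h
    rcases (hx i).lt_or_gt with hlt | hgt
    · filter_upwards [hi.eventually (lt_mem_nhds hlt)] with q hq
      exact iff_of_true hq.le hlt.le
    · filter_upwards [hi.eventually (gt_mem_nhds hgt)] with q hq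
      exact iff_of_false hq.not_ge hgt.not_ge
  filter_upwards [Filter.eventually_all.2 hstable] with q hq
  exact forall_congr' hq

theorem polyVol_rpow_mul_polyVol_rpow_le [Finite ι] (hn : PositivelySpans n) {a b : ℝ} (ha : 0 < a)
    (hb : 0 < b) (hab : a + b = 1) :
    polyVol n h ^ a * polyVol n q ^ b ≤ polyVol n (a • h + b • q) :=
  (volume_real_rpow_mul_volume_real_rpow_le ha hb hab (isCompact_polyhedron hn h)
    (isCompact_polyhedron hn q)).trans (measureReal_mono (smul_polyhedron_add_subset ha.le hb.le)
      (isCompact_polyhedron hn _).measure_ne_top)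

theorem concaveOn_log_polyVol [Finite ι] (hn : PositivelySpans n) :
    ConcaveOn ℝ {h | 0 < polyVol n h} fun h => Real.log (polyVol n h) := by
  have hle : ∀ ⦃h⦄, 0 < polyVol n h → ∀ ⦃q⦄, 0 < polyVol n q → ∀ ⦃a b : ℝ⦄, 0 < a → 0 < b →
      a + b = 1 → 0 < polyVol n h ^ a * polyVol n q ^ b ∧
        polyVol n h ^ a * polyVol n q ^ b ≤ polyVol n (a • h + b • q) :=
    fun h hh q hq a b ha hb hab => ⟨by positivity, polyVol_rpow_mul_polyVol_rpow_le hn ha hb hab⟩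
  refine concaveOn_iff_forall_pos.2 ⟨convex_iff_forall_pos.2 fun h hh q hq a b ha hb hab =>
    (hle hh hq ha hb hab).1.trans_le (hle hh hq ha hb hab).2, fun h hh q hq a b ha hb hab => ?_⟩
  have hh' : 0 < polyVol n h := hh
  have hq' : 0 < polyVol n q := hq
  rw [smul_eq_mul, smul_eq_mul, ← Real.log_rpow hh, ← Real.log_rpow hq,
    ← Real.log_mul (by positivity) (by positivity)]
  exact Real.log_le_log (hle hh hq ha hb hab).1 (hle hh hq ha hb hab).2

end PolyVol

/-! ### The gradient of the volume -/

section Gradient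

open Filter

theorem map_add_smul_sub_sub_le {V : Type*} [AddCommGroup V] [Module ℝ V] {s : Set V} {W : V → ℝ}
    (hW : ConcaveOn ℝ s W) {h q : V} {t : ℝ} (ht : 0 ≤ t) (hst : h + t • (h - q) ∈ s)
    (hq : q ∈ s) :
    W (h + t • (h - q)) - W h ≤ t * (W h - W q) := by
  have hle := hW.2 hst hq (show 0 ≤ (1 + t)⁻¹ by positivity)
    (show 0 ≤ t * (1 + t)⁻¹ by positivity) (by field_simp)
  have hh : (1 + t)⁻¹ • (h + t • (h - q)) + (t * (1 + t)⁻¹) • q = h := by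
    match_scalars <;> field_simp
    ring
  rw [hh, smul_eq_mul, smul_eq_mul] at hle
  have hscaled := mul_le_mul_of_nonneg_left hle (show 0 ≤ 1 + t by positivity)
  field_simp at hscaled
  linarith

variable {ι : Type*} [Fintype ι] [DecidableEq ι] {s : Set (ι → ℝ)} {W : (ι → ℝ) → ℝ}
  {W' h q : ι → ℝ}

theorem sum_inv_card_smul_update [Nonempty ι] (h δ : ι → ℝ) (t : ℝ) :
    ∑ j, (Fintype.card ι : ℝ)⁻¹ • Function.update h j (h j + Fintype.card ι * t * δ j) =
      h + t • δ := by
  have hupdate : ∀ j i, Function.update h j (h j + Fintype.card ι * t * δ j) i =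
      h i + if i = j then Fintype.card ι * t * δ i else 0 := fun j i => by
    rcases eq_or_ne i j with rfl | hij <;> simp [*]
  ext i
  simp only [Finset.sum_apply, Pi.smul_apply, hupdate, smul_eq_mul, mul_add, Finset.sum_add_distrib,
    Finset.sum_const, Finset.card_univ, nsmul_eq_mul, mul_ite, mul_zero, Finset.sum_ite_eq,
    Finset.mem_univ, if_true, Pi.add_apply]
  field_simp

theorem hasDerivAt_sum_update [Nonempty ι]
    (hW' : ∀ j, HasDerivAt (fun t => W (Function.update h j t)) (W' j) (h j)) (δ : ι → ℝ) :
    HasDerivAt (fun t : ℝ => ∑ j, (Fintype.card ι : ℝ)⁻¹ *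
      W (Function.update h j (h j + Fintype.card ι * t * δ j))) (∑ j, W' j * δ j) 0 := by
  refine HasDerivAt.fun_sum fun j _ => ?_
  have hline :
      HasDerivAt (fun t : ℝ => h j + Fintype.card ι * t * δ j) (Fintype.card ι * δ j) 0 := by
    simpa using (((hasDerivAt_id (0 : ℝ)).const_mul (Fintype.card ι : ℝ)).mul_const
      (δ j)).const_add (h j)
  have hj := (HasDerivAt.comp (h₂ := fun t => W (Function.update h j t)) (0 : ℝ)
    (by simpa using hW' j) hline).const_mul (Fintype.card ι : ℝ)⁻¹
  convert! hj using 1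
  field_simp

theorem sum_inv_card_mul_update_le (hW : ConcaveOn ℝ s W) [Nonempty ι] {δ : ι → ℝ} {t : ℝ}
    (hs : ∀ j, Function.update h j (h j + Fintype.card ι * t * δ j) ∈ s) :
    h + t • δ ∈ s ∧ ∑ j, (Fintype.card ι : ℝ)⁻¹ *
      W (Function.update h j (h j + Fintype.card ι * t * δ j)) ≤ W (h + t • δ) := by
  have hsum : ∑ _j : ι, (Fintype.card ι : ℝ)⁻¹ = 1 := by simp
  have hweights : ∀ j ∈ (Finset.univ : Finset ι), 0 ≤ (Fintype.card ι : ℝ)⁻¹ :=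
    fun _ _ => by positivity
  rw [← sum_inv_card_smul_update]
  exact ⟨hW.1.sum_mem hweights hsum fun j _ => hs j, hW.le_map_sum hweights hsum fun j _ => hs j⟩

/- The average of `W` over the points `h - k t δ_j e_j`, where `k` is the number of coordinates and
`δ = q - h`, bounds `W (h - t δ)` from below, while `h` lies between `h - t δ` and `q`. -/
theorem le_add_sum_mul_of_concaveOn (hW : ConcaveOn ℝ s W) (hs : s ∈ 𝓝 h)
    (hW' : ∀ j, HasDerivAt (fun t => W (Function.update h j t)) (W' j) (h j)) (hq : q ∈ s) :
    W q ≤ W h + ∑ j, W' j * (q j - h j) := by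
  rcases isEmpty_or_nonempty ι with hι | hι
  · simp [Subsingleton.elim q h]
  set ψ : ℝ → ℝ := fun t => ∑ j, (Fintype.card ι : ℝ)⁻¹ *
      W (Function.update h j (h j + Fintype.card ι * t * (h - q) j)) with hψ
  have hψ₀ : ψ 0 = W h := by simp [hψ]
  have hderiv : HasDerivAt ψ (∑ j, W' j * (h - q) j) 0 := hasDerivAt_sum_update hW' (h - q)
  have hmem : ∀ᶠ t : ℝ in 𝓝 0, ∀ j,
      Function.update h j (h j + Fintype.card ι * t * (h - q) j) ∈ s := by
    refine eventually_all.2 fun j => ?_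
    have hcont : ContinuousAt
        (fun t : ℝ => Function.update h j (h j + Fintype.card ι * t * (h - q) j)) 0 := by fun_prop
    exact hcont.eventually_mem (by simpa using hs)
  have hslope : ∀ᶠ t in 𝓝[>] (0 : ℝ), t⁻¹ * (ψ t - ψ 0) ≤ W h - W q := by
    filter_upwards [hmem.filter_mono nhdsWithin_le_nhds, self_mem_nhdsWithin] with t hts ht
    obtain ⟨hpoint, hjensen⟩ := sum_inv_card_mul_update_le hW hts
    rw [hψ₀, inv_mul_le_iff₀ (mem_Ioi.1 ht)]
    exact (sub_le_sub_right hjensen _).trans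
      (map_add_smul_sub_sub_le hW (le_of_lt (mem_Ioi.1 ht)) hpoint hq)
  have hlim := le_of_tendsto hderiv.tendsto_slope_zero_right (by simpa using hslope)
  have hneg : ∑ j, W' j * (h - q) j = -∑ j, W' j * (q j - h j) := by
    rw [← Finset.sum_neg_distrib]
    exact Finset.sum_congr rfl fun j _ => by rw [Pi.sub_apply]; ring
  linarith

end Gradient

section Truncation

variable {E : Type*} [NormedAddCommGroup E] [InnerProductSpace ℝ E] {u : E} {S : Set E}

theorem crossSection_sep_inner_le (hu : ‖u‖ = 1) (S : Set E) {s t : ℝ} :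
    crossSection u {x ∈ S | ⟪x, u⟫ ≤ t} s = {y ∈ crossSection u S s | s ≤ t} := by
  ext y
  simp only [mem_crossSection, mem_ofPred_eq, inner_smul_add_coe_self hu]

variable [FiniteDimensional ℝ E] [MeasurableSpace E] [BorelSpace E]

theorem volume_real_sep_inner_le (hu : ‖u‖ = 1) (hS : IsCompact S) (t : ℝ) :
    volume.real {x ∈ S | ⟪x, u⟫ ≤ t} = ∫ s in Iic t, volume.real (crossSection u S s) := by
  classical
  have hclosed : IsClosed {x | ⟪x, u⟫ ≤ t} := isClosed_le (by fun_prop) continuous_const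
  have hcompact : IsCompact {x ∈ S | ⟪x, u⟫ ≤ t} := hS.inter_right hclosed
  rw [volume_real_eq_integral_crossSection hu hcompact, ← integral_indicator measurableSet_Iic]
  refine integral_congr_ae (.of_forall fun s => ?_)
  by_cases hst : s ≤ t <;> simp [crossSection_sep_inner_le hu, hst]

theorem hasDerivAt_volume_real_sep_inner_le (hu : ‖u‖ = 1) (hS : IsCompact S) {t : ℝ}
    (ht : ContinuousAt (fun s => volume.real (crossSection u S s)) t) :
    HasDerivAt (fun r => volume.real {x ∈ S | ⟪x, u⟫ ≤ r})
      (volume.real (crossSection u S t)) t := by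
  have hint := integrable_volume_crossSection hu hS.measurableSet hS.measure_ne_top
  have hsplit : ∀ r, volume.real {x ∈ S | ⟪x, u⟫ ≤ r} =
      volume.real {x ∈ S | ⟪x, u⟫ ≤ t} + ∫ s in t..r, volume.real (crossSection u S s) := by
    intro r
    rw [volume_real_sep_inner_le hu hS, volume_real_sep_inner_le hu hS,
      ← intervalIntegral.integral_Iic_sub_Iic hint.integrableOn hint.integrableOn,
      add_sub_cancel]
  rw [funext hsplit]
  exact (intervalIntegral.integral_hasDerivAt_right hint.intervalIntegrable
    hint.aestronglyMeasurable.stronglyMeasurableAtFilter ht).const_add _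

end Truncation

/-- The volume of the facet with normal `n j` of the polyhedron with normals `n` and support numbers
`h`, where `‖n j‖ = 1`. -/
def facetVol {E ι : Type*} [NormedAddCommGroup E] [InnerProductSpace ℝ E] [FiniteDimensional ℝ E]
    [MeasurableSpace E] [BorelSpace E] (n : ι → E) (h : ι → ℝ) (j : ι) : ℝ :=
  volume.real (crossSection (n j) (polyhedron n h) (h j))

section FacetVol

variable {E ι : Type*} [NormedAddCommGroup E] [InnerProductSpace ℝ E] {n : ι → E} {h q : ι → ℝ}
  {j : ι}

theorem polyhedron_update [DecidableEq ι] {t r : ℝ} (htr : t ≤ r) :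
    polyhedron n (Function.update h j t) =
      {x ∈ polyhedron n (Function.update h j r) | ⟪x, n j⟫ ≤ t} := by
  ext x
  simp only [mem_polyhedron, mem_ofPred_eq, Function.forall_update_iff h fun i c => ⟪x, n i⟫ ≤ c]
  exact ⟨fun ⟨hj, hi⟩ => ⟨⟨hj.trans htr, hi⟩, hj⟩, fun ⟨⟨_, hi⟩, hj⟩ => ⟨hj, hi⟩⟩

theorem eq_or_eq_neg_of_orthogonalProjectionOnto_eq_zero {u w : E} (hu : ‖u‖ = 1) (hw : ‖w‖ = 1)
    (huw : (ℝ ∙ u)ᗮ.orthogonalProjectionOnto w = 0) : w = u ∨ w = -u := by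
  have hwu := inner_smul_add_orthogonalProjectionOnto hu w
  rw [huw, ZeroMemClass.coe_zero, add_zero] at hwu
  have habs : |⟪w, u⟫| = 1 := by
    rwa [← hwu, norm_smul, hu, mul_one, Real.norm_eq_abs] at hw
  rcases eq_or_eq_neg_of_abs_eq habs with hinner | hinner <;> rw [hinner] at hwu
  · exact Or.inl (by rw [← hwu, one_smul])
  · exact Or.inr (by rw [← hwu, neg_one_smul])

variable [FiniteDimensional ℝ E] [MeasurableSpace E] [BorelSpace E]

theorem facetVol_eq_polyVol : facetVol n h j =
    polyVol (fun i => (ℝ ∙ n j)ᗮ.orthogonalProjectionOnto (n i))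
      fun i => h i - h j * ⟪n j, n i⟫ := by
  rw [facetVol, crossSection_polyhedron, polyVol]

theorem facetVol_smul {t : ℝ} (ht : 0 < t) :
    facetVol n (t • h) j = t ^ Module.finrank ℝ (ℝ ∙ n j)ᗮ * facetVol n h j := by
  rw [facetVol_eq_polyVol, facetVol_eq_polyVol, ← polyVol_smul ht]
  congr 1
  ext i
  simp only [Pi.smul_apply, smul_eq_mul]
  ring

theorem add_pos_of_eq_neg [Finite ι] (hps : PositivelySpans n) (hh : 0 < polyVol n h) {i : ι}
    (hi : n i = -n j) (hj : n j ≠ 0) : 0 < h i + h j := by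
  obtain ⟨z, hz⟩ := (isSolidBody_polyhedron hps hh).interior_nonempty
  have hzi := inner_lt_of_mem_interior_polyhedron (i := i) (by rwa [hi, neg_ne_zero]) hz
  have hzj := inner_lt_of_mem_interior_polyhedron hj hz
  rw [hi, inner_neg_right] at hzi
  linarith

/- The degenerate constraints of the section are those with normals `n j` and `-n j`. The former is
avoided by relaxing the support number `h j`. -/
theorem continuousAt_volume_real_crossSection_polyhedron [Finite ι] [DecidableEq ι]
    (hn : ∀ i, ‖n i‖ = 1) (hinj : Function.Injective n) (hps : PositivelySpans n)
    (hh : 0 < polyVol n h) : ContinuousAt (fun s => volume.real (crossSection (n j)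
      (polyhedron n (Function.update h j (h j + 1))) s)) (h j) := by
  simp only [crossSection_polyhedron]
  refine ContinuousAt.comp (g := polyVol _) (continuousAt_polyVol
    (hps.orthogonalProjectionOnto (n j)) fun i hi => ?_) (by fun_prop)
  rcases eq_or_ne i j with rfl | hij
  · simp [hn]
  rcases eq_or_eq_neg_of_orthogonalProjectionOnto_eq_zero (hn j) (hn i) hi with hi | hi
  · exact absurd (hinj hi) hij
  · have hsum := add_pos_of_eq_neg hps hh hi (norm_ne_zero_iff.1 ((hn j).symm ▸ one_ne_zero))
    rw [Function.update_of_ne hij, hi, inner_neg_right, real_inner_self_eq_norm_sq, hn]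
    exact ne_of_gt (by linarith)

theorem hasDerivAt_polyVol_update [Finite ι] [DecidableEq ι] (hn : ∀ i, ‖n i‖ = 1)
    (hinj : Function.Injective n) (hps : PositivelySpans n) (hh : 0 < polyVol n h) (j : ι) :
    HasDerivAt (fun t => polyVol n (Function.update h j t)) (facetVol n h j) (h j) := by
  set P := polyhedron n (Function.update h j (h j + 1))
  have hderiv := hasDerivAt_volume_real_sep_inner_le (hn j)
    (isCompact_polyhedron hps (Function.update h j (h j + 1)))
    (continuousAt_volume_real_crossSection_polyhedron (j := j) hn hinj hps hh)
  have hfacet : facetVol n h j = volume.real (crossSection (n j) P (h j)) := by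
    have hPh := polyhedron_update (n := n) (h := h) (j := j) (lt_add_one (h j)).le
    rw [Function.update_eq_self] at hPh
    rw [facetVol, hPh, crossSection_sep_inner_le (hn j)]
    simp only [le_refl, and_true, ofPred_mem_eq]
    rfl
  rw [hfacet]
  refine hderiv.congr_of_eventuallyEq ?_
  filter_upwards [gt_mem_nhds (lt_add_one (h j))] with t ht
  rw [polyVol, polyhedron_update ht.le]

theorem setOf_polyVol_pos_mem_nhds [Finite ι] (hn : ∀ i, n i ≠ 0) (hps : PositivelySpans n)
    (hh : 0 < polyVol n h) : {p | 0 < polyVol n p} ∈ 𝓝 h :=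
  (continuousAt_polyVol hps fun i hi => absurd hi (hn i)).eventually (lt_mem_nhds hh)

end FacetVol

/-! ### Minkowski's inequality and uniqueness -/

section MinkowskiInequality

variable {E ι : Type*} [NormedAddCommGroup E] [InnerProductSpace ℝ E] [FiniteDimensional ℝ E]
  [MeasurableSpace E] [BorelSpace E] [Fintype ι] {n : ι → E} {h q : ι → ℝ}

theorem log_polyVol_le (hn : ∀ i, ‖n i‖ = 1) (hinj : Function.Injective n)
    (hps : PositivelySpans n) (hh : 0 < polyVol n h) (hq : 0 < polyVol n q) :
    Real.log (polyVol n q) ≤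
      Real.log (polyVol n h) + ∑ j, facetVol n h j / polyVol n h * (q j - h j) := by
  classical
  refine le_add_sum_mul_of_concaveOn (concaveOn_log_polyVol hps)
    (setOf_polyVol_pos_mem_nhds (fun i => norm_ne_zero_iff.1 ((hn i).symm ▸ one_ne_zero)) hps hh)
    (fun j => ?_) hq
  simpa only [Function.update_eq_self] using
    (hasDerivAt_polyVol_update hn hinj hps hh j).log (by simpa using hh.ne')

/- Euler's identity for the volume, which is homogeneous of degree `dim E` with gradient `facetVol`:
the tangent inequality on the ray through `h` is an equality at `h`. -/
theorem sum_facetVol_mul (hn : ∀ i, ‖n i‖ = 1) (hinj : Function.Injective n)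
    (hps : PositivelySpans n) (hh : 0 < polyVol n h) :
    ∑ j, facetVol n h j * h j = Module.finrank ℝ E * polyVol n h := by
  set S := ∑ j, facetVol n h j / polyVol n h * h j with hS
  have hmax : IsLocalMax (fun t : ℝ => Module.finrank ℝ E * Real.log t - (t - 1) * S) 1 := by
    filter_upwards [lt_mem_nhds one_pos] with t ht
    have hle := log_polyVol_le hn hinj hps hh (q := t • h)
      (by rw [polyVol_smul ht]; positivity)
    rw [polyVol_smul ht, Real.log_mul (by positivity) hh.ne', Real.log_pow] at hle
    have hsum : ∑ j, facetVol n h j / polyVol n h * ((t • h) j - h j) = (t - 1) * S := by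
      rw [hS, Finset.mul_sum]
      exact Finset.sum_congr rfl fun j _ => by rw [Pi.smul_apply, smul_eq_mul]; ring
    simp only [Real.log_one, mul_zero, sub_self, zero_mul]
    linarith
  have hderiv := ((Real.hasDerivAt_log one_ne_zero).const_mul (Module.finrank ℝ E : ℝ)).sub
    (((hasDerivAt_id (1 : ℝ)).sub_const 1).mul_const S)
  have hzero := hmax.hasDerivAt_eq_zero hderiv
  have hsum : ∑ j, facetVol n h j * h j = polyVol n h * S := by
    rw [hS, Finset.mul_sum]
    exact Finset.sum_congr rfl fun j _ => by field_simp
  rw [hsum, show S = Module.finrank ℝ E by linarith, mul_comm]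

theorem polyVol_le_of_sum_facetVol_mul_le (hn : ∀ i, ‖n i‖ = 1) (hinj : Function.Injective n)
    (hps : PositivelySpans n) (hh : 0 < polyVol n h)
    (hle : ∑ j, facetVol n h j * q j ≤ ∑ j, facetVol n h j * h j) :
    polyVol n q ≤ polyVol n h := by
  rcases (polyVol_nonneg (n := n) (h := q)).eq_or_lt with hq | hq
  · exact hq.symm.trans_le hh.le
  have hsum : ∑ j, facetVol n h j / polyVol n h * (q j - h j) ≤ 0 := by
    simp only [div_mul_eq_mul_div, ← Finset.sum_div, mul_sub, Finset.sum_sub_distrib]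
    rw [← sub_div]
    exact div_nonpos_of_nonpos_of_nonneg (sub_nonpos.2 hle) hh.le
  exact (Real.log_le_log_iff hq hh).1 (by linarith [log_polyVol_le hn hinj hps hh hq])

end MinkowskiInequality

section Uniqueness

variable {E ι : Type*} [NormedAddCommGroup E] [InnerProductSpace ℝ E] [FiniteDimensional ℝ E]
  [MeasurableSpace E] [BorelSpace E] [Finite ι] {n : ι → E} {h q : ι → ℝ}

theorem polyVol_le_of_facetVol_eq (hE : 2 ≤ Module.finrank ℝ E) (hn : ∀ i, ‖n i‖ = 1)
    (hinj : Function.Injective n) (hps : PositivelySpans n) (hh : 0 < polyVol n h)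
    (hq : 0 < polyVol n q) (hhq : facetVol n h = facetVol n q) : polyVol n h ≤ polyVol n q := by
  cases nonempty_fintype ι
  set r := polyVol n q / polyVol n h with hr
  have hr₀ : 0 < r := by positivity
  have hsum : ∑ j, facetVol n h j * (r⁻¹ • q) j = ∑ j, facetVol n h j * h j := by
    simp only [Pi.smul_apply, smul_eq_mul, mul_left_comm _ r⁻¹, ← Finset.mul_sum,
      sum_facetVol_mul hn hinj hps hh]
    rw [hhq, sum_facetVol_mul hn hinj hps hq, hr]
    field_simp
  have hle := polyVol_le_of_sum_facetVol_mul_le hn hinj hps hh hsum.le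
  rw [polyVol_smul (inv_pos.2 hr₀), inv_pow, inv_mul_le_iff₀ (by positivity), ← div_le_iff₀ hh,
    ← hr] at hle
  have hone : 1 ≤ r := by
    by_contra! hlt
    exact (pow_lt_self_of_lt_one₀ hr₀ hlt hE).not_ge hle
  rwa [hr, one_le_div hh] at hone

theorem polyVol_midpoint_le (hn : ∀ i, ‖n i‖ = 1) (hinj : Function.Injective n)
    (hps : PositivelySpans n) (hh : 0 < polyVol n h) (hhq : facetVol n h = facetVol n q)
    (hV : polyVol n h = polyVol n q) :
    polyVol n ((1 / 2 : ℝ) • h + (1 / 2 : ℝ) • q) ≤ polyVol n h := by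
  cases nonempty_fintype ι
  refine polyVol_le_of_sum_facetVol_mul_le hn hinj hps hh (le_of_eq ?_)
  have hsum : ∑ j, facetVol n h j * q j = ∑ j, facetVol n h j * h j := by
    rw [sum_facetVol_mul hn hinj hps hh, hhq, sum_facetVol_mul hn hinj hps (hV ▸ hh), hV]
  simp only [Pi.add_apply, Pi.smul_apply, smul_eq_mul, mul_add, mul_left_comm _ (1 / 2 : ℝ),
    Finset.sum_add_distrib, ← Finset.mul_sum, hsum]
  ring

theorem exists_polyhedron_eq_vadd_of_facetVol_eq (hE : 2 ≤ Module.finrank ℝ E)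
    (hn : ∀ i, ‖n i‖ = 1) (hinj : Function.Injective n) (hps : PositivelySpans n)
    (hh : 0 < polyVol n h) (hq : 0 < polyVol n q) (hhq : facetVol n h = facetVol n q) :
    ∃ v : E, polyhedron n q = v +ᵥ polyhedron n h := by
  have hV : polyVol n h = polyVol n q :=
    (polyVol_le_of_facetVol_eq hE hn hinj hps hh hq hhq).antisymm
      (polyVol_le_of_facetVol_eq hE hn hinj hps hq hh hhq.symm)
  exact (isSolidBody_polyhedron hps hh).exists_eq_vadd_of_volume_midpoint_le
    (isSolidBody_polyhedron hps hq) hV <|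
    (measureReal_mono (smul_polyhedron_add_subset (by norm_num) (by norm_num))
      (isCompact_polyhedron hps _).measure_ne_top).trans
      (polyVol_midpoint_le hn hinj hps hh hhq hV)

end Uniqueness

/-! ### Existence -/

section PositivelySpans

variable {E ι : Type*} [NormedAddCommGroup E] [InnerProductSpace ℝ E] {n : ι → E}

theorem PositivelySpans.nonempty (hn : PositivelySpans n) : Nonempty ι :=
  let ⟨_, _, hc⟩ := hn
  ⟨(hc 0).choose⟩

theorem positivelySpans_of_forall_exists_inner_pos [FiniteDimensional ℝ E] [Nontrivial E] [Finite ι]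
    (hn : ∀ x : E, x ≠ 0 → ∃ j, 0 < ⟪x, n j⟫) : PositivelySpans n := by
  cases nonempty_fintype ι
  obtain ⟨j₁, -⟩ := hn _ (exists_ne (0 : E)).choose_spec
  have hne : (Finset.univ : Finset ι).Nonempty := ⟨j₁, Finset.mem_univ _⟩
  obtain ⟨x₀, hx₀, hmin⟩ := (isCompact_sphere (0 : E) 1).exists_isMinOn
    (NormedSpace.sphere_nonempty.2 zero_le_one)
    (f := fun x => Finset.univ.sup' hne fun j => ⟪x, n j⟫)
    (Continuous.continuousOn (Continuous.finset_sup'_apply hne fun j _ => by fun_prop))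
  obtain ⟨j₀, hj₀⟩ := hn x₀ (ne_zero_of_mem_unit_sphere ⟨x₀, hx₀⟩)
  refine ⟨_, hj₀.trans_le (Finset.le_sup' (fun j => ⟪x₀, n j⟫) (Finset.mem_univ j₀)), fun x => ?_⟩
  rcases eq_or_ne x 0 with rfl | hx
  · exact ⟨j₁, by simp⟩
  obtain ⟨j, -, hj⟩ := Finset.exists_mem_eq_sup' hne fun j => ⟪‖x‖⁻¹ • x, n j⟫
  have hle := hmin (show ‖x‖⁻¹ • x ∈ Metric.sphere (0 : E) 1 by simp [norm_smul, hx])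
  simp only [mem_ofPred_eq, hj] at hle
  rw [real_inner_smul_left, ← div_eq_inv_mul, le_div_iff₀ (norm_pos_iff.2 hx)] at hle
  exact ⟨j, hle⟩

theorem exists_inner_pos_of_sum_smul_eq_zero [Fintype ι] {F : ι → ℝ} (hF : ∀ j, 0 < F j)
    (hspan : Submodule.span ℝ (range n) = ⊤) (hsum : ∑ j, F j • n j = 0) {x : E} (hx : x ≠ 0) :
    ∃ j, 0 < ⟪x, n j⟫ := by
  by_contra! hle
  have hzero : ∑ j, F j * ⟪x, n j⟫ = 0 := by
    simp only [← real_inner_smul_right, ← inner_sum, hsum, inner_zero_right]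
  have horth : ∀ j, ⟪x, n j⟫ = 0 := fun j => by
    have hj := (Finset.sum_eq_zero_iff_of_nonpos fun j _ =>
      mul_nonpos_of_nonneg_of_nonpos (hF j).le (hle j)).1 hzero j (Finset.mem_univ j)
    exact (mul_eq_zero.1 hj).resolve_left (hF j).ne'
  refine hx ((Submodule.mem_bot ℝ).1 ?_)
  rw [← Submodule.top_orthogonal_eq_bot, ← hspan, Submodule.mem_orthogonal']
  have hker : Submodule.span ℝ (range n) ≤ (innerSL ℝ x).toLinearMap.ker :=
    Submodule.span_le.2 (range_subset_iff.2 horth)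
  exact fun y hy => hker hy

end PositivelySpans

section Existence

variable {E ι : Type*} [Fintype ι] {F : ι → ℝ}

theorem isCompact_setOf_nonneg_sum_mul_eq (hF : ∀ j, 0 < F j) (c : ℝ) :
    IsCompact {h : ι → ℝ | 0 ≤ h ∧ ∑ j, F j * h j = c} := by
  refine (isCompact_Icc (a := (0 : ι → ℝ)) (b := fun j => c / F j)).of_isClosed_subset
    (isClosed_Ici.inter (isClosed_eq (by fun_prop) continuous_const)) fun h ⟨h₀, hsum⟩ =>
      ⟨h₀, fun j => ?_⟩
  rw [le_div_iff₀ (hF j), ← hsum, mul_comm]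
  exact Finset.single_le_sum (f := fun j => F j * h j)
    (fun i _ => mul_nonneg (hF i).le (h₀ i)) (Finset.mem_univ j)

variable [NormedAddCommGroup E] [InnerProductSpace ℝ E] [FiniteDimensional ℝ E]

theorem finrank_orthogonal_span_of_norm_eq_one {u : E} (hu : ‖u‖ = 1) :
    Module.finrank ℝ (ℝ ∙ u)ᗮ = Module.finrank ℝ E - 1 := by
  have hsum := (ℝ ∙ u).finrank_add_finrank_orthogonal
  rw [finrank_span_singleton (norm_ne_zero_iff.1 (hu ▸ one_ne_zero))] at hsum
  omega

variable [MeasurableSpace E] [BorelSpace E] {n : ι → E}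

/- Translating a polyhedron of positive volume so that it contains the origin makes its support
numbers nonnegative and preserves the constraint. -/
theorem exists_nonneg_polyVol_eq (hsum : ∑ j, F j • n j = 0) {p : ι → ℝ} (hp : 0 < polyVol n p) :
    ∃ q, 0 ≤ q ∧ ∑ j, F j * q j = ∑ j, F j * p j ∧ polyVol n q = polyVol n p := by
  obtain ⟨x, hx⟩ : (polyhedron n p).Nonempty := by
    rw [nonempty_iff_ne_empty]
    intro hempty
    simp [polyVol, hempty] at hp
  refine ⟨p + fun i => ⟪-x, n i⟫, fun i => ?_, ?_, polyVol_add_inner _⟩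
  · simpa [inner_neg_left] using hx i
  · have hzero : ∑ j, F j * ⟪-x, n j⟫ = 0 := by
      simp only [← real_inner_smul_right, ← inner_sum, hsum, inner_zero_right]
    simp only [Pi.add_apply, mul_add, Finset.sum_add_distrib, hzero, add_zero]

theorem exists_polyVol_max (hn : ∀ i, n i ≠ 0) (hps : PositivelySpans n) (hF : ∀ j, 0 < F j)
    (hsum : ∑ j, F j • n j = 0) :
    ∃ h : ι → ℝ, ∑ j, F j * h j = 1 ∧ 0 < polyVol n h ∧
      ∀ p : ι → ℝ, ∑ j, F j * p j = 1 → polyVol n p ≤ polyVol n h := by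
  have := hps.nonempty
  have hFsum : 0 < ∑ j, F j := Finset.sum_pos (fun j _ => hF j) Finset.univ_nonempty
  have hconst : (fun _ => (∑ j, F j)⁻¹ : ι → ℝ) ∈ {h | 0 ≤ h ∧ ∑ j, F j * h j = 1} :=
    ⟨fun j => inv_nonneg.2 hFsum.le, by rw [← Finset.sum_mul, mul_inv_cancel₀ hFsum.ne']⟩
  obtain ⟨h, ⟨-, hh⟩, hmax⟩ := (isCompact_setOf_nonneg_sum_mul_eq hF 1).exists_isMaxOn ⟨_, hconst⟩
    (f := polyVol n) fun p _ =>
      (continuousAt_polyVol hps fun i hi => absurd hi (hn i)).continuousWithinAt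
  have hpos : 0 < polyVol n h :=
    (polyVol_pos hps ⟨0, mem_interior_iff_mem_nhds.2 <| polyhedron_mem_nhds fun i => by
      simpa only [inner_zero_left] using inv_pos.2 hFsum⟩).trans_le (hmax hconst)
  refine ⟨h, hh, hpos, fun p hp => ?_⟩
  rcases (polyVol_nonneg (n := n) (h := p)).eq_or_lt with hzero | hp₀
  · exact hzero.symm.trans_le hpos.le
  obtain ⟨q, hq, hqsum, hqp⟩ := exists_nonneg_polyVol_eq hsum hp₀
  exact hqp.symm.trans_le (hmax ⟨hq, hqsum.trans hp⟩)

theorem polyVol_le_mul_pow {h : ι → ℝ}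
    (hmax : ∀ p : ι → ℝ, ∑ j, F j * p j = 1 → polyVol n p ≤ polyVol n h) {p : ι → ℝ}
    (hp : 0 < ∑ j, F j * p j) :
    polyVol n p ≤ polyVol n h * (∑ j, F j * p j) ^ Module.finrank ℝ E := by
  set c := ∑ j, F j * p j with hc
  have hle := hmax (c⁻¹ • p) (by
    simp only [Pi.smul_apply, smul_eq_mul, mul_left_comm _ c⁻¹, ← Finset.mul_sum, ← hc,
      inv_mul_cancel₀ hp.ne'])
  rwa [polyVol_smul (inv_pos.2 hp), inv_pow, inv_mul_le_iff₀ (by positivity), mul_comm] at hle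

/- Lagrange's condition, read off from the homogeneous form of maximality: as functions of `p`, the
two sides of `polyVol_le_mul_pow` touch at `h`. -/
theorem facetVol_eq_of_polyVol_max {h : ι → ℝ} (hn : ∀ i, ‖n i‖ = 1) (hinj : Function.Injective n)
    (hps : PositivelySpans n) (hh : ∑ j, F j * h j = 1) (hpos : 0 < polyVol n h)
    (hmax : ∀ p : ι → ℝ, ∑ j, F j * p j = 1 → polyVol n p ≤ polyVol n h) (j : ι) :
    facetVol n h j = polyVol n h * Module.finrank ℝ E * F j := by
  classical
  have hconstraint :
      HasDerivAt (fun t => ∑ i, F i * Function.update h j t i) (F j) (h j) := by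
    have hterm := fun i => ((hasDerivAt_pi.1 (hasDerivAt_update h j (h j))) i).const_mul (F i)
    simpa [Pi.single_apply] using HasDerivAt.fun_sum fun i (_ : i ∈ Finset.univ) => hterm i
  have hbound := ((hconstraint.pow (Module.finrank ℝ E)).const_mul (polyVol n h)).sub
    (hasDerivAt_polyVol_update hn hinj hps hpos j)
  have hmin : IsLocalMin (fun t => polyVol n h *
      (∑ i, F i * Function.update h j t i) ^ Module.finrank ℝ E -
        polyVol n (Function.update h j t)) (h j) := by
    have hone : 0 < ∑ i, F i * Function.update h j (h j) i := by
      simp only [Function.update_eq_self, hh, one_pos]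
    filter_upwards [hconstraint.continuousAt.eventually (lt_mem_nhds hone)] with t ht
    simpa [hh] using polyVol_le_mul_pow hmax ht
  have hzero := hmin.hasDerivAt_eq_zero hbound
  simp only [Function.update_eq_self, hh, one_pow, mul_one] at hzero
  linarith

theorem exists_facetVol_eq (hE : 2 ≤ Module.finrank ℝ E) (hn : ∀ i, ‖n i‖ = 1)
    (hinj : Function.Injective n) (hps : PositivelySpans n) (hF : ∀ j, 0 < F j)
    (hsum : ∑ j, F j • n j = 0) : ∃ h : ι → ℝ, 0 < polyVol n h ∧ facetVol n h = F := by
  obtain ⟨h, hh, hpos, hmax⟩ := exists_polyVol_max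
    (fun i => norm_ne_zero_iff.1 ((hn i).symm ▸ one_ne_zero)) hps hF hsum
  set c := polyVol n h * Module.finrank ℝ E with hc
  have hc₀ : 0 < c := by positivity
  set t := c⁻¹ ^ ((Module.finrank ℝ E - 1 : ℕ) : ℝ)⁻¹ with ht
  have ht₀ : 0 < t := by positivity
  refine ⟨t • h, by rw [polyVol_smul ht₀]; positivity, funext fun j => ?_⟩
  rw [facetVol_smul ht₀, finrank_orthogonal_span_of_norm_eq_one (hn j), ht,
    Real.rpow_inv_natCast_pow (by positivity) (by omega),
    facetVol_eq_of_polyVol_max hn hinj hps hh hpos hmax, ← hc, inv_mul_cancel_left₀ hc₀.ne']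

end Existence

/-! ### Polyhedra are polytopes -/

section ExtremePoints

variable {E ι : Type*} [NormedAddCommGroup E] [InnerProductSpace ℝ E] [Finite ι] {n : ι → E}
  {h : ι → ℝ} {x w : E}

theorem eventually_add_smul_mem_polyhedron (hx : x ∈ polyhedron n h)
    (hw : ∀ i, ⟪x, n i⟫ = h i → ⟪w, n i⟫ = 0) :
    ∀ᶠ t in 𝓝[>] (0 : ℝ), x + t • w ∈ polyhedron n h := by
  refine Filter.eventually_all.2 fun i => ?_
  rcases (hx i).eq_or_lt with hi | hi
  · exact .of_forall fun t => by
      rw [inner_add_left, real_inner_smul_left, hw i hi, hi, mul_zero, add_zero]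
  · have hcont : ContinuousAt (fun t : ℝ => ⟪x + t • w, n i⟫) 0 := by fun_prop
    filter_upwards [nhdsWithin_le_nhds (hcont.eventually_lt continuousAt_const (by simpa using hi))]
      with t ht using le_of_lt ht

/- Two extreme points with the same active constraints coincide: otherwise the polyhedron contains a
segment around the first one in the direction of their difference. -/
theorem finite_extremePoints_polyhedron : ((polyhedron n h).extremePoints ℝ).Finite := by
  refine Set.Finite.of_finite_image (f := fun x => {i | ⟪x, n i⟫ = h i}) (toFinite _) ?_
  intro x hx y _ hxy
  have hactive : ∀ i, ⟪x, n i⟫ = h i → ⟪x - y, n i⟫ = 0 := fun i hi => by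
    have hy : ⟪y, n i⟫ = h i := (Set.ext_iff.1 hxy i).1 hi
    rw [inner_sub_left, hi, hy, sub_self]
  have hactive_neg : ∀ i, ⟪x, n i⟫ = h i → ⟪-(x - y), n i⟫ = 0 := fun i hi => by
    rw [inner_neg_left, hactive i hi, neg_zero]
  obtain ⟨t, ⟨hadd, hsub⟩, ht⟩ := ((eventually_add_smul_mem_polyhedron hx.1 hactive).and
    (eventually_add_smul_mem_polyhedron hx.1 hactive_neg)).and self_mem_nhdsWithin |>.exists
  have hmid : x ∈ openSegment ℝ (x + t • (x - y)) (x + t • -(x - y)) :=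
    ⟨1 / 2, 1 / 2, by norm_num, by norm_num, by norm_num, by module⟩
  have hzero : t • (x - y) = 0 := by simpa using hx.2 hadd hsub hmid
  exact sub_eq_zero.1 ((smul_eq_zero.1 hzero).resolve_left (ne_of_gt ht))

end ExtremePoints

theorem isPolytope_polyhedron {ι : Type*} [Finite ι] {m : ℕ} {n : ι → Euc m}
    (hps : PositivelySpans n) (h : ι → ℝ) : IsPolytope (polyhedron n h) := by
  have hfin : ((polyhedron n h).extremePoints ℝ).Finite := finite_extremePoints_polyhedron
  refine ⟨hfin.toFinset, ?_⟩
  rw [hfin.coe_toFinset, ← (hfin.isCompact_convexHull ℝ).isClosed.closure_eq]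
  exact (closure_convexHull_extremePoints (isCompact_polyhedron hps h) convex_polyhedron).symm

/-! ### Facets -/

section FacetNormals

variable {E ι : Type*} [NormedAddCommGroup E] [InnerProductSpace ℝ E] [Finite ι] {n : ι → E}
  {h : ι → ℝ} {u : E} {s : ℝ}

theorem exists_inner_eq_of_isGreatest (hu : u ≠ 0)
    (hs : s ∈ upperBounds ((⟪·, u⟫) '' polyhedron n h)) {x : E} (hx : x ∈ polyhedron n h)
    (hxs : ⟪x, u⟫ = s) : ∃ i, ⟪x, n i⟫ = h i := by
  by_contra! hne
  have hnhds := polyhedron_mem_nhds fun i => (hx i).lt_of_ne (hne i)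
  exact (inner_lt_of_mem_interior hu hs (mem_interior_iff_mem_nhds.2 hnhds)).ne hxs

variable [FiniteDimensional ℝ E] [MeasurableSpace E] [BorelSpace E]

theorem exists_eq_of_volume_crossSection_pos (hn : ∀ i, ‖n i‖ = 1) (hps : PositivelySpans n)
    (hint : (interior (polyhedron n h)).Nonempty) (hu : ‖u‖ = 1)
    (hs : s ∈ upperBounds ((⟪·, u⟫) '' polyhedron n h))
    (hpos : 0 < volume (crossSection u (polyhedron n h) s)) : ∃ i, u = n i := by
  have hu₀ : u ≠ 0 := norm_ne_zero_iff.1 (hu ▸ one_ne_zero)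
  have hvol : 0 < volume.real (crossSection u (polyhedron n h) s) :=
    ENNReal.toReal_pos hpos.ne'
      (isCompact_crossSection (isCompact_polyhedron hps h) u s).measure_ne_top
  rw [crossSection_polyhedron] at hvol
  obtain ⟨y, hy⟩ := (isSolidBody_polyhedron (hps.orthogonalProjectionOnto u) hvol).interior_nonempty
  have hyP : y ∈ crossSection u (polyhedron n h) s :=
    (crossSection_polyhedron u s).symm ▸ interior_subset hy
  obtain ⟨i, hi⟩ := exists_inner_eq_of_isGreatest hu₀ hs hyP (inner_smul_add_coe_self hu s y)
  have hproj : (ℝ ∙ u)ᗮ.orthogonalProjectionOnto (n i) = 0 := by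
    by_contra hne
    refine (inner_lt_of_mem_interior_polyhedron (i := i) hne hy).ne ?_
    rw [Submodule.inner_orthogonalProjectionOnto_eq_of_mem_left, ← hi, inner_add_left,
      real_inner_smul_left, add_sub_cancel_left]
  refine ⟨i, ((eq_or_eq_neg_of_orthogonalProjectionOnto_eq_zero hu (hn i) hproj).resolve_right
    fun hneg => ?_).symm⟩
  obtain ⟨z, hz⟩ := hint
  have hzu := inner_lt_of_mem_interior hu₀ hs hz
  have hzi := interior_subset hz i
  rw [← hi, hneg, inner_neg_right, inner_neg_right, inner_smul_add_coe_self hu] at hzi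
  linarith

end FacetNormals

theorem exists_mem_forall_notMem_affineSubspace {E : Type*} [NormedAddCommGroup E]
    [NormedSpace ℝ E] [FiniteDimensional ℝ E] {U : Set E} (hU : IsOpen U) (hUne : U.Nonempty)
    {A : Set (AffineSubspace ℝ E)} (hA : A.Countable) : ∃ z ∈ U, ∀ a ∈ A, a ≠ ⊤ → z ∉ a := by
  borelize E
  by_contra! hcover
  refine (hU.measure_pos Measure.addHaar hUne).ne' (measure_mono_null
    (t := ⋃ a ∈ A \ {⊤}, (a : Set E)) (fun z hz => ?_) ?_)
  · obtain ⟨a, ha, htop, hza⟩ := hcover z hz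
    exact mem_biUnion ⟨ha, htop⟩ hza
  · exact (measure_biUnion_null_iff (hA.mono sdiff_subset)).2 fun a ha =>
      Measure.addHaar_affineSubspace _ a ha.2

theorem interior_convexHull_image_nonempty {E V : Type*} [AddCommGroup E] [Module ℝ E]
    [NormedAddCommGroup V] [NormedSpace ℝ V] [FiniteDimensional ℝ V] (f : E →ₗ[ℝ] V) {T : Set E}
    (hf : f '' affineSpan ℝ T = univ) : (interior (convexHull ℝ (f '' T))).Nonempty := by
  rw [interior_convexHull_nonempty_iff_affineSpan_eq_top, ← f.coe_toAffineMap,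
    ← AffineSubspace.map_span]
  exact SetLike.coe_injective hf

section SupportingHyperplane

variable {E : Type*} [NormedAddCommGroup E] [InnerProductSpace ℝ E] {P T : Set E} {u x y z : E}

theorem exists_mem_segment_mem_frontier (hx : x ∉ P) (hz : z ∈ interior P) :
    ∃ y ∈ segment ℝ x z, y ∈ frontier P := by
  by_contra! hP
  obtain ⟨y, -, hy, hy'⟩ := (convex_segment x z).isPreconnected (interior P) (closure P)ᶜ
    isOpen_interior isClosed_closure.isOpen_compl
    (fun y hy => by
      by_contra hcon
      rw [mem_union, not_or, notMem_compl_iff] at hcon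
      exact hP y hy ⟨hcon.2, hcon.1⟩)
    ⟨z, right_mem_segment ℝ x z, hz⟩
    ⟨x, left_mem_segment ℝ x z, fun hxc => hP x (left_mem_segment ℝ x z)
      ⟨hxc, fun hxi => hx (interior_subset hxi)⟩⟩
  exact hy' (interior_subset_closure hy)

theorem exists_isGreatest_inner_of_mem_frontier [FiniteDimensional ℝ E] (hP : Convex ℝ P)
    (hPc : IsClosed P) (hint : (interior P).Nonempty) (hy : y ∈ frontier P) :
    ∃ u : E, ‖u‖ = 1 ∧ IsGreatest ((⟪·, u⟫) '' P) ⟪y, u⟫ := by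
  obtain ⟨f, hf₀, hf⟩ := geometric_hahn_banach_of_nonempty_interior_point hP hy.2 hint
  set w := (InnerProductSpace.toDual ℝ E).symm f with hw
  have hfw : ∀ a, f a = ⟪a, w⟫ := fun a => by
    rw [real_inner_comm, hw, InnerProductSpace.toDual_symm_apply]
  have hw₀ : w ≠ 0 := by simpa [hw] using hf₀
  refine ⟨‖w‖⁻¹ • w, norm_smul_inv_norm hw₀, mem_image_of_mem _ (hPc.frontier_subset hy), ?_⟩
  rintro _ ⟨a, ha, rfl⟩
  simp only [real_inner_smul_right, ← hfw]
  exact mul_le_mul_of_nonneg_left (hf a ha) (by positivity)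

theorem mem_convexHull_sep_inner_eq {S : Set E} (hS : S.Finite) (hy : y ∈ convexHull ℝ S)
    (hmax : ⟪y, u⟫ ∈ upperBounds ((⟪·, u⟫) '' convexHull ℝ S)) :
    y ∈ convexHull ℝ {w ∈ S | ⟪w, u⟫ = ⟪y, u⟫} := by
  set face := {w ∈ convexHull ℝ S | ∀ v ∈ convexHull ℝ S, innerSL ℝ u v ≤ innerSL ℝ u w}
  have hface : IsExposed ℝ (convexHull ℝ S) face := fun _ => ⟨innerSL ℝ u, rfl⟩
  have hle : ∀ w ∈ convexHull ℝ S, ⟪w, u⟫ ≤ ⟪y, u⟫ := fun w hw =>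
    hmax (mem_image_of_mem _ hw)
  have hyface : y ∈ face := ⟨hy, fun w hw => by
    simpa only [innerSL_apply_apply, real_inner_comm u] using hle w hw⟩
  have hextreme : face.extremePoints ℝ ⊆ {w ∈ S | ⟪w, u⟫ = ⟪y, u⟫} := fun w hw =>
    ⟨extremePoints_convexHull_subset (hface.isExtreme.extremePoints_subset_extremePoints hw),
      (hle w hw.1.1).antisymm (by
        simpa only [innerSL_apply_apply, real_inner_comm u] using hw.1.2 y hy)⟩
  rw [← closure_convexHull_extremePoints (hface.isCompact (hS.isCompact_convexHull ℝ))
    (hface.convex (convex_convexHull ℝ S))] at hyface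
  exact closure_minimal (convexHull_mono hextreme)
    ((hS.sep _).isCompact_convexHull ℝ).isClosed hyface

theorem inner_eq_of_mem_affineSpan {s : ℝ} (hT : ∀ w ∈ T, ⟪w, u⟫ = s) (hx : x ∈ affineSpan ℝ T) :
    ⟪x, u⟫ = s := by
  have hle : affineSpan ℝ T ≤
      (affineSpan ℝ {s}).comap (innerSL ℝ u).toLinearMap.toAffineMap :=
    affineSpan_le.2 fun w hw => by simpa [real_inner_comm] using hT w hw
  simpa [real_inner_comm] using hle hx

theorem mem_affineSpan_of_mem_affineSpan_insert {s : ℝ} (hT : ∀ w ∈ T, ⟪w, u⟫ = s)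
    (hTne : T.Nonempty) (hx : ⟪x, u⟫ ≠ s) (hz : z ∈ affineSpan ℝ (insert x T)) (hzs : ⟪z, u⟫ = s) :
    z ∈ affineSpan ℝ T := by
  obtain ⟨y, hy⟩ := hTne
  have hyT := subset_affineSpan ℝ T hy
  rw [← affineSpan_insert_affineSpan, AffineSubspace.mem_affineSpan_insert_iff hyT] at hz
  obtain ⟨r, p, hp, rfl⟩ := hz
  have hr : r = 0 := by
    simpa [inner_add_left, real_inner_smul_left, inner_sub_left, inner_eq_of_mem_affineSpan hT hp,
      hT y hy, sub_eq_zero, hx] using hzs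
  simpa [hr] using hp

variable [FiniteDimensional ℝ E] [MeasurableSpace E] [BorelSpace E]

theorem volume_crossSection_pos_of_affineSpan_eq_top {s : ℝ} (hP : Convex ℝ P) (hu : ‖u‖ = 1)
    (hTP : T ⊆ P) (hT : ∀ w ∈ T, ⟪w, u⟫ = s) (hTne : T.Nonempty) (hx : ⟪x, u⟫ ≠ s)
    (htop : affineSpan ℝ (insert x T) = ⊤) : 0 < volume (crossSection u P s) := by
  have hsurj : (ℝ ∙ u)ᗮ.orthogonalProjectionOnto '' affineSpan ℝ T = univ := by
    refine eq_univ_of_forall fun y => ⟨s • u + y, ?_, ?_⟩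
    · exact mem_affineSpan_of_mem_affineSpan_insert hT hTne hx
        (htop ▸ AffineSubspace.mem_top ℝ E _) (inner_smul_add_coe_self hu s y)
    · have hu₀ : (ℝ ∙ u)ᗮ.orthogonalProjectionOnto u = 0 :=
        Submodule.orthogonalProjectionOnto_orthogonalComplement_singleton_eq_zero u
      simp [hu₀]
  have hsub : convexHull ℝ ((ℝ ∙ u)ᗮ.orthogonalProjectionOnto '' T) ⊆ crossSection u P s := by
    refine convexHull_min ?_ (convex_crossSection hP u s)
    rintro _ ⟨w, hw, rfl⟩
    rw [mem_crossSection, ← hT w hw, inner_smul_add_orthogonalProjectionOnto hu]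
    exact hTP hw
  have hint := interior_convexHull_image_nonempty
    (ℝ ∙ u)ᗮ.orthogonalProjectionOnto.toLinearMap hsurj
  exact (isOpen_interior.measure_pos volume hint).trans_le
    (measure_mono (interior_subset.trans hsub))

/- A segment from `x` to a generic interior point enters the polytope at a point which is not in any
proper affine subspace spanned by `x` and vertices. Hence the vertices on a supporting hyperplane at
that point span it. -/
theorem exists_volume_crossSection_pos_of_notMem {S : Set E} (hS : S.Finite)
    (hint : (interior (convexHull ℝ S)).Nonempty) (hx : x ∉ convexHull ℝ S) :
    ∃ u : E, ‖u‖ = 1 ∧ ∃ s, IsGreatest ((⟪·, u⟫) '' convexHull ℝ S) s ∧ s < ⟪x, u⟫ ∧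
      0 < volume (crossSection u (convexHull ℝ S) s) := by
  have hP := convex_convexHull ℝ S
  obtain ⟨z, hz, hgeneric⟩ := exists_mem_forall_notMem_affineSubspace isOpen_interior hint
    (hS.finite_subsets.image fun T => affineSpan ℝ (insert x T)).countable
  obtain ⟨y, hyseg, hy⟩ := exists_mem_segment_mem_frontier hx hz
  have hyP := (hS.isCompact_convexHull ℝ).isClosed.frontier_subset hy
  obtain ⟨u, hu, hmax⟩ := exists_isGreatest_inner_of_mem_frontier hP
    (hS.isCompact_convexHull ℝ).isClosed hint hy
  have hxy : x ≠ y := fun hxy => hx (hxy ▸ hyP)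
  have hyx : ⟪y, u⟫ < ⟪x, u⟫ := by
    have hzy := inner_lt_of_mem_interior (norm_ne_zero_iff.1 (hu ▸ one_ne_zero)) hmax.2 hz
    obtain ⟨a, b, ha, hb, hab, rfl⟩ := mem_openSegment_of_ne_left_right hxy
      (fun hzy => hy.2 (hzy ▸ hz)) hyseg
    obtain rfl := eq_sub_of_add_eq hab
    simp only [inner_add_left, real_inner_smul_left] at hzy ⊢
    nlinarith
  have hyT := mem_convexHull_sep_inner_eq hS hyP hmax.2
  set T := {w ∈ S | ⟪w, u⟫ = ⟪y, u⟫}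
  refine ⟨u, hu, _, hmax, hyx, volume_crossSection_pos_of_affineSpan_eq_top hP hu
    ((sep_subset _ _).trans (subset_convexHull ℝ S)) (fun w hw => hw.2)
    (convexHull_nonempty_iff.1 ⟨y, hyT⟩) hyx.ne' ?_⟩
  by_contra htop
  refine hgeneric _ (mem_image_of_mem _ (sep_subset _ _)) htop (affineSpan_pair_le_of_mem_of_mem
    (subset_affineSpan ℝ _ (mem_insert x T)) (affineSpan_mono ℝ (subset_insert x T)
      (convexHull_subset_affineSpan T hyT)) ?_)
  exact (mem_segment_iff_wbtw.1 hyseg).right_mem_affineSpan_of_left_ne hxy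

theorem convexHull_eq_polyhedron {ι : Type*} {n : ι → E} {h : ι → ℝ} {S : Set E} (hS : S.Finite)
    (hint : (interior (convexHull ℝ S)).Nonempty)
    (hh : ∀ i, IsGreatest ((⟪·, n i⟫) '' convexHull ℝ S) (h i))
    (hfacet : ∀ u, ‖u‖ = 1 → ∀ s, IsGreatest ((⟪·, u⟫) '' convexHull ℝ S) s →
      0 < volume (crossSection u (convexHull ℝ S) s) → ∃ i, u = n i) :
    convexHull ℝ S = polyhedron n h := by
  refine Subset.antisymm (fun x hx i => (hh i).2 (mem_image_of_mem _ hx)) fun x hx => ?_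
  by_contra hxS
  obtain ⟨u, hu, s, hs, hsx, hpos⟩ := exists_volume_crossSection_pos_of_notMem hS hint hxS
  obtain ⟨i, rfl⟩ := hfacet u hu s hs hpos
  exact (hsx.trans_le (hx i)).ne (hs.unique (hh i))

end SupportingHyperplane

/-! ### Face areas -/

section FaceArea

variable {m : ℕ} {P : Set (Euc m)} {u : Euc m} {s : ℝ}

theorem faceIn_eq (hs : IsGreatest ((⟪·, u⟫) '' P) s) : faceIn P u = {x ∈ P | ⟪x, u⟫ = s} := by
  obtain ⟨⟨y, hy, hys⟩, hle⟩ := hs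
  ext x
  refine and_congr_right fun hx => ⟨fun hmax => ?_, fun hxs w hw => ?_⟩
  · exact (hle (mem_image_of_mem _ hx)).antisymm (hys.symm.trans_le (hmax y hy))
  · exact (hle (mem_image_of_mem _ hw)).trans_eq hxs.symm

/-- The ratio of the `(m-1)`-dimensional Hausdorff measure, as normalized in the definition of
`faceArea`, to the Lebesgue measure of hyperplanes in `Euc m`. -/
def hausdorffFactor (m : ℕ) : ℝ :=
  (exists_hausdorffMeasure_section_eq (E := Euc m) (m - 1)).choose

theorem hausdorffFactor_pos (m : ℕ) : 0 < hausdorffFactor m :=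
  (exists_hausdorffMeasure_section_eq (E := Euc m) (m - 1)).choose_spec.1

theorem faceArea_eq (hu : ‖u‖ = 1) (hs : IsGreatest ((⟪·, u⟫) '' P) s) :
    faceArea P u = ENNReal.ofReal (hausdorffFactor m) * volume (crossSection u P s) := by
  have hm : 1 ≤ m := by
    by_contra! hm
    obtain rfl : m = 0 := by omega
    exact one_ne_zero (hu.symm.trans (norm_of_subsingleton u))
  have hfinrank : Module.finrank ℝ (ℝ ∙ u)ᗮ = m - 1 := by
    rw [finrank_orthogonal_span_of_norm_eq_one hu, finrank_euclideanSpace_fin]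
  rw [faceArea, faceIn_eq hs, ← Nat.cast_one, ← Nat.cast_sub hm]
  exact (exists_hausdorffMeasure_section_eq (m - 1)).choose_spec.2 u hu hfinrank P s

theorem isFacetNormal_iff (hs : IsGreatest ((⟪·, u⟫) '' P) s) :
    IsFacetNormal P u ↔ ‖u‖ = 1 ∧ 0 < volume (crossSection u P s) := by
  refine and_congr_right fun hu => ?_
  rw [faceArea_eq hu hs, CanonicallyOrderedAdd.mul_pos,
    and_iff_right (ENNReal.ofReal_pos.2 (hausdorffFactor_pos m))]

end FaceArea

section HasFacets

variable {m : ℕ} {ι : Type*} {n : ι → Euc m} {h F : ι → ℝ} {P Q : Set (Euc m)}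

/-- `P` is a full-dimensional polytope whose facets have the outward unit normals `n j` and the
areas `F j`. -/
def HasFacets (n : ι → Euc m) (F : ι → ℝ) (P : Set (Euc m)) : Prop :=
  IsPolytope P ∧ IsConvexBody P ∧ (∀ j, faceArea P (n j) = ENNReal.ofReal (F j)) ∧
    ∀ u, IsFacetNormal P u → ∃ j, u = n j

theorem exists_isGreatest_inner {K : Set (Euc m)} (hK : IsCompact K) (hne : K.Nonempty)
    (u : Euc m) : ∃ s, IsGreatest ((⟪·, u⟫) '' K) s :=
  (hK.image (by fun_prop)).exists_isGreatest (hne.image _)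

theorem isGreatest_inner_polyhedron {j : ι} (hn : ‖n j‖ = 1) (hj : 0 < facetVol n h j) :
    IsGreatest ((⟪·, n j⟫) '' polyhedron n h) (h j) := by
  refine ⟨(crossSection_nonempty_iff hn).1 (nonempty_of_measureReal_ne_zero hj.ne'), ?_⟩
  rintro _ ⟨x, hx, rfl⟩
  exact hx j

theorem faceArea_polyhedron [Finite ι] (hps : PositivelySpans n) {j : ι} (hn : ‖n j‖ = 1)
    (hj : IsGreatest ((⟪·, n j⟫) '' polyhedron n h) (h j)) :
    faceArea (polyhedron n h) (n j) = ENNReal.ofReal (hausdorffFactor m * facetVol n h j) := by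
  rw [faceArea_eq hn hj, ENNReal.ofReal_mul (hausdorffFactor_pos m).le, facetVol,
    ofReal_measureReal
      (isCompact_crossSection (isCompact_polyhedron hps h) (n j) (h j)).measure_ne_top]

theorem hasFacets_polyhedron [Finite ι] (hn : ∀ j, ‖n j‖ = 1) (hps : PositivelySpans n)
    (hh : 0 < polyVol n h) (hfacet : ∀ j, 0 < facetVol n h j) :
    HasFacets n (fun j => hausdorffFactor m * facetVol n h j) (polyhedron n h) := by
  have hbody := isSolidBody_polyhedron hps hh
  refine ⟨isPolytope_polyhedron hps h, ⟨hbody.convex, hbody.isCompact, hbody.interior_nonempty⟩,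
    fun j => faceArea_polyhedron hps (hn j) (isGreatest_inner_polyhedron (hn j) (hfacet j)),
    fun u hu => ?_⟩
  obtain ⟨s, hs⟩ := exists_isGreatest_inner hbody.isCompact hbody.nonempty u
  exact exists_eq_of_volume_crossSection_pos hn hps hbody.interior_nonempty hu.1 hs.2
    ((isFacetNormal_iff hs).1 hu).2

theorem HasFacets.exists_eq_polyhedron [Finite ι] (hn : ∀ j, ‖n j‖ = 1) (hps : PositivelySpans n)
    (hF : ∀ j, 0 ≤ F j) (hP : HasFacets n F P) : ∃ h, P = polyhedron n h ∧ 0 < polyVol n h ∧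
      ∀ j, hausdorffFactor m * facetVol n h j = F j := by
  obtain ⟨⟨S, hS⟩, ⟨-, hcompact, hint⟩, harea, hfacet⟩ := hP
  choose h hh using fun j => exists_isGreatest_inner hcompact (hint.mono interior_subset) (n j)
  obtain rfl : P = polyhedron n h := by
    subst hS
    exact convexHull_eq_polyhedron S.finite_toSet hint hh fun u hu s hs hpos =>
      hfacet u ((isFacetNormal_iff hs).2 ⟨hu, hpos⟩)
  refine ⟨h, rfl, polyVol_pos hps hint, fun j => ?_⟩
  have hj := (faceArea_polyhedron hps (hn j) (hh j)).symm.trans (harea j)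
  exact (ENNReal.ofReal_eq_ofReal_iff
    (mul_nonneg (hausdorffFactor_pos m).le measureReal_nonneg) (hF j)).1 hj

theorem HasFacets.exists_eq_vadd [Finite ι] (hm : 2 ≤ m) (hn : ∀ j, ‖n j‖ = 1)
    (hinj : Function.Injective n) (hps : PositivelySpans n) (hF : ∀ j, 0 ≤ F j)
    (hP : HasFacets n F P) (hQ : HasFacets n F Q) : ∃ v : Euc m, Q = v +ᵥ P := by
  obtain ⟨h, rfl, hh, hhF⟩ := hP.exists_eq_polyhedron hn hps hF
  obtain ⟨q, rfl, hq, hqF⟩ := hQ.exists_eq_polyhedron hn hps hF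
  refine exists_polyhedron_eq_vadd_of_facetVol_eq (hm.trans_eq finrank_euclideanSpace_fin.symm)
    hn hinj hps hh hq (funext fun j => ?_)
  exact mul_left_cancel₀ (hausdorffFactor_pos m).ne' ((hhF j).trans (hqF j).symm)

theorem exists_hasFacets [Fintype ι] (hm : 2 ≤ m) (hn : ∀ j, ‖n j‖ = 1)
    (hinj : Function.Injective n) (hps : PositivelySpans n) (hF : ∀ j, 0 < F j)
    (hsum : ∑ j, F j • n j = 0) : ∃ P, HasFacets n F P := by
  have hc := hausdorffFactor_pos m
  obtain ⟨h, hh, hhF⟩ := exists_facetVol_eq (F := (hausdorffFactor m)⁻¹ • F)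
    (hm.trans_eq finrank_euclideanSpace_fin.symm) hn hinj hps
    (fun j => smul_pos (inv_pos.2 hc) (hF j))
    (by simp only [Pi.smul_apply, smul_assoc, ← Finset.smul_sum, hsum, smul_zero])
  refine ⟨polyhedron n h, ?_⟩
  convert hasFacets_polyhedron hn hps hh fun j => ?_ using 1
  · ext j
    simp [hhF, hc.ne']
  · rw [hhF]
    exact smul_pos (inv_pos.2 hc) (hF j)

theorem span_range_eq_top_of_not_exists_linearMap {V : Type*} [AddCommGroup V] [Module ℝ V]
    {n : ι → V} (hn : ¬∃ f : V →ₗ[ℝ] ℝ, f ≠ 0 ∧ ∀ j, f (n j) = 0) :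
    Submodule.span ℝ (range n) = ⊤ := by
  by_contra hspan
  obtain ⟨f, hf, hker⟩ := Submodule.exists_le_ker_of_lt_top _ (lt_top_iff_ne_top.2 hspan)
  exact hn ⟨f, hf, fun j => hker (Submodule.subset_span (mem_range_self j))⟩

end HasFacets

/-- Minkowski's theorem for polytopes: existence and uniqueness up to
translation of a polytope with prescribed facet normals and facet areas. -/
theorem minkowski_polytope {m k : ℕ} (hm : 2 ≤ m)
    (n : Fin k → Euc m) (F : Fin k → ℝ)
    (hF : ∀ j, 0 < F j) (hn : ∀ j, ‖n j‖ = 1) (hinj : Function.Injective n)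
    (hspan : ¬∃ f : Euc m →ₗ[ℝ] ℝ, f ≠ 0 ∧ ∀ j, f (n j) = 0)
    (hsum : ∑ j, F j • n j = 0) :
    (∃ P : Set (Euc m), IsPolytope P ∧ IsConvexBody P ∧
        (∀ j, faceArea P (n j) = ENNReal.ofReal (F j)) ∧
        (∀ u : Euc m, IsFacetNormal P u → ∃ j, u = n j)) ∧
    ∀ P Q : Set (Euc m),
      (IsPolytope P ∧ IsConvexBody P ∧
        (∀ j, faceArea P (n j) = ENNReal.ofReal (F j)) ∧
        (∀ u : Euc m, IsFacetNormal P u → ∃ j, u = n j)) →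
      (IsPolytope Q ∧ IsConvexBody Q ∧
        (∀ j, faceArea Q (n j) = ENNReal.ofReal (F j)) ∧
        (∀ u : Euc m, IsFacetNormal Q u → ∃ j, u = n j)) →
      ∃ v : Euc m, Q = v +ᵥ P := by
  have hps : PositivelySpans n := by
    have : NeZero m := ⟨by omega⟩
    have hspan' := span_range_eq_top_of_not_exists_linearMap hspan
    exact positivelySpans_of_forall_exists_inner_pos fun x hx =>
      exists_inner_pos_of_sum_smul_eq_zero hF hspan' hsum hx
  exact ⟨exists_hasFacets hm hn hinj hps hF hsum, fun P Q hP hQ =>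
    HasFacets.exists_eq_vadd hm hn hinj hps (fun j => (hF j).le) hP hQ⟩
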